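/- arXiv:2108.10374 — 3 statements merged into one kernel-verified Lean document; each statement's English description precedes it below -/
import Mathlib

section
/- Let d ≥ 2, ε ∈ (0,1), γ > 0, and set δ = ε^{1+γ}/4. There exists a family 𝒩 of axis-parallel boxes in [0,1]^d of cardinality at most 7 d ln d · (1 + 1/γ)^d · (ln(e/ε^{1+γ}))^d / ε^{1+γ} such that every axis-parallel box B ⊆ [0,1]^d of volume at least ε contains some member B₀ ∈ 𝒩 with volume |B₀| ≥ δ. -/
/-!
Endow the space of boxes with the measure that in each coordinate is `da db / (b - a)²` on the
endpoints `a < b`. It is invariant under coordinatewise affine maps, so the mass of the sub-boxes of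
`I` of volume at least `s` depends only on `|I| / s`, and scaling the logarithms of the side lengths
shows that it grows at most like `(|I| / s) * log (|I| / s) ^ (2 d)`.

Comparing masses, a maximal family of boxes whose nearly full sub-boxes form disjoint sets is not
too large. Slightly shrunk, its members form an approximation `X` with volume threshold `ε'` just
below `ε`. Now lower the threshold to `δ`. For each member of `X`, its sub-boxes of volume at least
`δ` carry a fraction at least `1 / R` of the mass of all boxes of volume at least `δ`, where
`R = (log δ⁻¹ / log (ε' / δ)) ^ (2 d) / ε'`. By averaging, some box of volume at least `δ` lies in
a fraction `1 / R` of the members of `X`. Greedily repeating this `R t` times leaves only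
`exp (-t) |X|` members without a chosen sub-box, and these are kept. With `t` about `log (|X| / R)`
the result has at most `R (t + 1) + 1` boxes. For `ε` close to `1`, where the `+ 1` would be too
expensive, a single cube suffices.
-/

open BoxIntegral MeasureTheory
open scoped ENNReal

section Boxes

variable {ι : Type*}

/-- The unit cube `[0,1]^ι`. -/
def unitBox (ι : Type*) : Box ι := ⟨0, 1, fun _ => zero_lt_one⟩

/-- The concentric copy of `I` scaled by the factor `1 - 2κ`. Every box inside `I` that has at least
the fraction `1 - κ` of its volume contains this core. -/
def coreBox (I : Box ι) (κ : ℝ) (hκ : κ < 1 / 2) : Box ι where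
  lower i := I.lower i + κ * (I.upper i - I.lower i)
  upper i := I.upper i - κ * (I.upper i - I.lower i)
  lower_lt_upper i := by nlinarith [I.lower_lt_upper i]

/-- The box with lower corner `p.2` and side lengths `exp (-p.1 i)`. -/
noncomputable def logBox (p : (ι → ℝ) × (ι → ℝ)) : Box ι where
  lower := p.2
  upper i := p.2 i + Real.exp (-p.1 i)
  lower_lt_upper _ := lt_add_of_pos_right _ (Real.exp_pos _)

lemma side_le_side {I J : Box ι} (hJI : J ≤ I) (i : ι) :
    J.upper i - J.lower i ≤ I.upper i - I.lower i :=
  sub_le_sub ((Box.le_iff_bounds.1 hJI).2 i) ((Box.le_iff_bounds.1 hJI).1 i)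

lemma coreBox_le (I : Box ι) {κ : ℝ} (hκ₀ : 0 ≤ κ) (hκ : κ < 1 / 2) : coreBox I κ hκ ≤ I := by
  have margin_nonneg (i : ι) : 0 ≤ κ * (I.upper i - I.lower i) :=
    mul_nonneg hκ₀ (sub_nonneg.2 (I.lower_le_upper i))
  exact Box.le_iff_bounds.2 ⟨fun i => le_add_of_nonneg_right (margin_nonneg i),
    fun i => sub_le_self _ (margin_nonneg i)⟩

lemma logBox_le_iff {p : (ι → ℝ) × (ι → ℝ)} {I : Box ι} :
    logBox p ≤ I ↔ I.lower ≤ p.2 ∧ p.2 ≤ fun i => I.upper i - Real.exp (-p.1 i) := by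
  simp only [Box.le_iff_bounds, logBox, Pi.le_def, le_sub_iff_add_le]

variable [Fintype ι]

/-- The volume of a box, as the product of its side lengths. -/
def boxVol (I : Box ι) : ℝ := ∏ i, (I.upper i - I.lower i)

lemma boxVol_pos (I : Box ι) : 0 < boxVol I :=
  Finset.prod_pos fun i _ => sub_pos.2 (I.lower_lt_upper i)

lemma boxVol_unitBox : boxVol (unitBox ι) = 1 := by simp [boxVol, unitBox]

lemma boxVol_coreBox (I : Box ι) {κ : ℝ} (hκ : κ < 1 / 2) :
    boxVol (coreBox I κ hκ) = (1 - 2 * κ) ^ Fintype.card ι * boxVol I := by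
  rw [boxVol, boxVol, ← Finset.card_univ, ← Finset.prod_const, ← Finset.prod_mul_distrib]
  refine Finset.prod_congr rfl fun i _ => ?_
  simp only [coreBox]
  ring

lemma boxVol_logBox (p : (ι → ℝ) × (ι → ℝ)) : boxVol (logBox p) = Real.exp (-∑ i, p.1 i) := by
  simp only [boxVol, logBox, add_sub_cancel_left, ← Finset.sum_neg_distrib, Real.exp_sum]

lemma boxVol_mono {I J : Box ι} (hJI : J ≤ I) : boxVol J ≤ boxVol I :=
  Finset.prod_le_prod (fun i _ => sub_nonneg.2 (J.lower_le_upper i)) fun i _ => side_le_side hJI i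

lemma mul_side_le_side {I J : Box ι} (hJI : J ≤ I) {c : ℝ} (hc : c * boxVol I ≤ boxVol J) (i : ι) :
    c * (I.upper i - I.lower i) ≤ J.upper i - J.lower i := by
  classical
  have side_pos (K : Box ι) (j : ι) : 0 < K.upper j - K.lower j := sub_pos.2 (K.lower_lt_upper j)
  have boxVol_eq (K : Box ι) : boxVol K =
      (K.upper i - K.lower i) * ∏ j ∈ Finset.univ.erase i, (K.upper j - K.lower j) :=
    (Finset.mul_prod_erase _ (fun j => K.upper j - K.lower j) (Finset.mem_univ i)).symm
  have others_pos : 0 < ∏ j ∈ Finset.univ.erase i, (I.upper j - I.lower j) :=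
    Finset.prod_pos fun j _ => side_pos I j
  have others_le : ∏ j ∈ Finset.univ.erase i, (J.upper j - J.lower j) ≤
      ∏ j ∈ Finset.univ.erase i, (I.upper j - I.lower j) :=
    Finset.prod_le_prod (fun j _ => (side_pos J j).le) fun j _ => side_le_side hJI j
  rw [boxVol_eq, boxVol_eq, ← mul_assoc] at hc
  exact le_of_mul_le_mul_right
    (hc.trans (mul_le_mul_of_nonneg_left others_le (side_pos J i).le)) others_pos

lemma coreBox_le_of_boxVol_le {I J : Box ι} (hJI : J ≤ I) {κ : ℝ} (hκ : κ < 1 / 2)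
    (hvol : (1 - κ) * boxVol I ≤ boxVol J) : coreBox I κ hκ ≤ J := by
  have hside := mul_side_le_side hJI hvol
  obtain ⟨hlower, hupper⟩ := Box.le_iff_bounds.1 hJI
  refine Box.le_iff_bounds.2 ⟨fun i => ?_, fun i => ?_⟩ <;> simp only [coreBox] <;>
    linarith [hside i, hlower i, hupper i]

end Boxes

section SubboxMass

variable {ι : Type*} [Fintype ι]

/-- The measure on box parameters (see `logBox`) that is invariant under coordinatewise affine maps
of the boxes; in terms of endpoints `a < b` it is the product of the measures `da db / (b - a)²`. -/
noncomputable def boxMeasure (ι : Type*) [Fintype ι] : Measure ((ι → ℝ) × (ι → ℝ)) :=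
  (volume.withDensity fun u => ENNReal.ofReal (Real.exp (∑ i, u i))).prod volume

/-- The parameters (see `logBox`) of the boxes inside `I` of volume at least `s`. -/
def subboxes (I : Box ι) (s : ℝ) : Set ((ι → ℝ) × (ι → ℝ)) :=
  {p | logBox p ≤ I ∧ s ≤ boxVol (logBox p)}

/-- The `boxMeasure` of the boxes inside `I` of volume at least `exp (-S) * boxVol I`, which by
affine invariance does not depend on `I`. -/
noncomputable def subboxMass (ι : Type*) [Fintype ι] (S : ℝ) : ℝ≥0∞ :=
  ∫⁻ u in {u : ι → ℝ | ∑ i, u i ≤ S}, ∏ i, ENNReal.ofReal (Real.exp (u i) - 1)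

lemma subboxes_subset {I J : Box ι} (hIJ : I ≤ J) {s t : ℝ} (hts : t ≤ s) :
    subboxes I s ⊆ subboxes J t :=
  fun _ hp => ⟨hp.1.trans hIJ, hts.trans hp.2⟩

lemma measurableSet_subboxes (I : Box ι) (s : ℝ) : MeasurableSet (subboxes I s) := by
  simp only [subboxes, logBox_le_iff, boxVol_logBox, Set.ofPred_and]
  refine ((measurableSet_le ?_ ?_).inter (measurableSet_le ?_ ?_)).inter
    (measurableSet_le ?_ ?_) <;> fun_prop

lemma measurableSet_sum_le (S : ℝ) : MeasurableSet {u : ι → ℝ | ∑ i, u i ≤ S} :=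
  measurableSet_le (by fun_prop) (by fun_prop)

lemma volume_slice_subboxes (I : Box ι) {s : ℝ} {u : ι → ℝ} (hs : s ≤ Real.exp (-∑ i, u i)) :
    ENNReal.ofReal (Real.exp (∑ i, u i)) * volume (Prod.mk u ⁻¹' subboxes I s) =
      ∏ i, ENNReal.ofReal (Real.exp (u i + Real.log (I.upper i - I.lower i)) - 1) := by
  have slice_eq : Prod.mk u ⁻¹' subboxes I s =
      Set.Icc I.lower (fun i => I.upper i - Real.exp (-u i)) := by
    ext v
    simp only [subboxes, Set.mem_preimage, Set.mem_ofPred_eq, logBox_le_iff, boxVol_logBox, hs,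
      and_true, Set.mem_Icc]
  rw [slice_eq, Real.volume_Icc_pi, Real.exp_sum,
    ENNReal.ofReal_prod_of_nonneg fun i _ => (Real.exp_pos _).le, ← Finset.prod_mul_distrib]
  refine Finset.prod_congr rfl fun i _ => ?_
  rw [← ENNReal.ofReal_mul (Real.exp_pos _).le, Real.exp_add,
    Real.exp_log (sub_pos.2 (I.lower_lt_upper i)), Real.exp_neg]
  congr 1
  field_simp
  ring

lemma boxMeasure_subboxes (I : Box ι) {s : ℝ} (hs : 0 < s) :
    boxMeasure ι (subboxes I s) = subboxMass ι (Real.log (boxVol I / s)) := by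
  set c : ι → ℝ := fun i => Real.log (I.upper i - I.lower i)
  have log_ratio : Real.log (boxVol I / s) = ∑ i, c i - Real.log s := by
    rw [Real.log_div (boxVol_pos I).ne' hs.ne', boxVol,
      Real.log_prod fun i _ => (sub_pos.2 (I.lower_lt_upper i)).ne']
  have sum_le_iff (u : ι → ℝ) :
      ∑ i, (u + c) i ≤ Real.log (boxVol I / s) ↔ s ≤ Real.exp (-∑ i, u i) := by
    rw [← Real.log_le_iff_le_exp hs, log_ratio]
    simp only [Pi.add_apply, Finset.sum_add_distrib]
    constructor <;> intro h <;> linarith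
  rw [boxMeasure, Measure.prod_apply (measurableSet_subboxes I s),
    lintegral_withDensity_eq_lintegral_mul _ (by fun_prop)
      (measurable_measure_prodMk_left (measurableSet_subboxes I s)), subboxMass,
    ← (measurePreserving_add_right volume c).setLIntegral_comp_preimage
      (measurableSet_sum_le _) (by fun_prop),
    ← lintegral_indicator ((measurableSet_sum_le _).preimage (by fun_prop))]
  refine lintegral_congr fun u => ?_
  by_cases hu : s ≤ Real.exp (-∑ i, u i)
  · rw [Set.indicator_of_mem (by exact (sum_le_iff u).2 hu), Pi.mul_apply,
      volume_slice_subboxes I hu]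
    rfl
  · have slice_eq : Prod.mk u ⁻¹' subboxes I s = ∅ := by
      ext v
      simp [subboxes, boxVol_logBox, hu]
    rw [Set.indicator_of_notMem (by exact fun h => hu ((sum_le_iff u).1 h)), Pi.mul_apply,
      slice_eq, measure_empty, mul_zero]

lemma subboxMass_pos {S : ℝ} (hS : 0 < S) : 0 < subboxMass ι S := by
  rw [subboxMass, setLIntegral_pos_iff (by fun_prop)]
  have isOpen_interior : IsOpen {u : ι → ℝ | (∀ i, 0 < u i) ∧ ∑ i, u i < S} := by
    simp only [Set.ofPred_and, Set.ofPred_forall]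
    exact (isOpen_iInter_of_finite fun i => isOpen_lt (by fun_prop) (by fun_prop)).inter
      (isOpen_lt (by fun_prop) (by fun_prop))
  have interior_nonempty : {u : ι → ℝ | (∀ i, 0 < u i) ∧ ∑ i, u i < S}.Nonempty := by
    refine ⟨fun _ => S / (Fintype.card ι + 1), fun _ => by positivity, ?_⟩
    rw [Finset.sum_const, Finset.card_univ, nsmul_eq_mul, ← mul_div_assoc,
      div_lt_iff₀ (by positivity)]
    linarith
  refine (isOpen_interior.measure_pos volume interior_nonempty).trans_le (measure_mono ?_)
  rintro u ⟨hpos, hsum⟩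
  exact ⟨by simp [Finset.prod_eq_zero_iff, hpos], hsum.le⟩

lemma subboxMass_lt_top (S : ℝ) : subboxMass ι S < ∞ := by
  have integrand_le : ∀ u ∈ {u : ι → ℝ | ∑ i, u i ≤ S},
      ∏ i, ENNReal.ofReal (Real.exp (u i) - 1) ≤ (Set.Icc 0 fun _ => S).indicator
        (fun _ => ENNReal.ofReal (Real.exp S - 1) ^ Fintype.card ι) u := by
    intro u hsum
    by_cases hu : ∀ i, 0 ≤ u i
    · have hle (i : ι) : u i ≤ S :=
        (Finset.single_le_sum (fun j _ => hu j) (Finset.mem_univ i)).trans hsum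
      rw [Set.indicator_of_mem (Set.mem_Icc.2 ⟨hu, hle⟩), ← Finset.card_univ, ← Finset.prod_const]
      gcongr with i
      exact hle i
    · obtain ⟨i, hi⟩ := not_forall.1 hu
      rw [Finset.prod_eq_zero (Finset.mem_univ i) (ENNReal.ofReal_of_nonpos
        (sub_nonpos.2 (Real.exp_le_one_iff.2 (not_le.1 hi).le)))]
      exact zero_le
  calc subboxMass ι S
      ≤ ∫⁻ u : ι → ℝ, (Set.Icc 0 fun _ => S).indicator
          (fun _ => ENNReal.ofReal (Real.exp S - 1) ^ Fintype.card ι) u :=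
        (setLIntegral_mono' (measurableSet_sum_le S) integrand_le).trans
          (setLIntegral_le_lintegral _ _)
    _ < ∞ := by
        rw [lintegral_indicator_const measurableSet_Icc]
        exact ENNReal.mul_lt_top (ENNReal.pow_lt_top ENNReal.ofReal_lt_top)
          isCompact_Icc.measure_lt_top

lemma exp_mul_sub_one_le {c : ℝ} (hc : 1 ≤ c) (v : ℝ) :
    Real.exp (c * v) - 1 ≤ c * Real.exp ((c - 1) * v) * (Real.exp v - 1) := by
  have bernoulli : 1 + c * (Real.exp (-v) - 1) ≤ Real.exp (-(c * v)) := by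
    have := one_add_mul_self_le_rpow_one_add (s := Real.exp (-v) - 1)
      (by linarith [Real.exp_pos (-v)]) hc
    rwa [add_sub_cancel, ← Real.exp_mul, neg_mul, mul_comm v c] at this
  calc Real.exp (c * v) - 1
      = Real.exp (c * v) * (1 - Real.exp (-(c * v))) := by
        rw [mul_sub, ← Real.exp_add, add_neg_cancel, Real.exp_zero, mul_one]
    _ ≤ Real.exp (c * v) * (c * (1 - Real.exp (-v))) := by
        gcongr
        linarith
    _ = c * Real.exp ((c - 1) * v) * (Real.exp v - 1) := by
        rw [sub_one_mul, Real.exp_sub, Real.exp_neg]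
        field_simp

lemma setLIntegral_eq_mul_setLIntegral_smul {c : ℝ} (hc : 0 < c) {f : (ι → ℝ) → ℝ≥0∞}
    (hf : Measurable f) {s : Set (ι → ℝ)} (hs : MeasurableSet s) :
    ∫⁻ u in s, f u =
      ENNReal.ofReal (c ^ Fintype.card ι) * ∫⁻ u in (c • ·) ⁻¹' s, f (c • u) := by
  rw [← setLIntegral_map hs hf (by fun_prop), Measure.map_addHaar_smul volume hc.ne',
    Measure.restrict_smul, lintegral_smul_measure, smul_eq_mul, ← mul_assoc,
    ← ENNReal.ofReal_mul (by positivity), Module.finrank_fintype_fun_eq_card,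
    abs_of_pos (by positivity), mul_inv_cancel₀ (by positivity), ENNReal.ofReal_one, one_mul]

lemma prod_ofReal_exp_smul_sub_one_le {c S : ℝ} (hc : 1 ≤ c) {u : ι → ℝ} (hu : ∑ i, u i ≤ S) :
    ∏ i, ENNReal.ofReal (Real.exp ((c • u) i) - 1) ≤
      ENNReal.ofReal (c ^ Fintype.card ι * Real.exp ((c - 1) * S)) *
        ∏ i, ENNReal.ofReal (Real.exp (u i) - 1) := by
  calc ∏ i, ENNReal.ofReal (Real.exp ((c • u) i) - 1)
      ≤ ∏ i, (ENNReal.ofReal (c * Real.exp ((c - 1) * u i)) *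
          ENNReal.ofReal (Real.exp (u i) - 1)) := by
        refine Finset.prod_le_prod' fun i _ => ?_
        rw [← ENNReal.ofReal_mul (by positivity)]
        exact ENNReal.ofReal_le_ofReal (exp_mul_sub_one_le hc (u i))
    _ = ENNReal.ofReal (c ^ Fintype.card ι * Real.exp ((c - 1) * ∑ i, u i)) *
          ∏ i, ENNReal.ofReal (Real.exp (u i) - 1) := by
        rw [Finset.prod_mul_distrib, ← ENNReal.ofReal_prod_of_nonneg fun i _ => by positivity,
          Finset.prod_mul_distrib, ← Real.exp_sum, ← Finset.mul_sum, Finset.prod_const,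
          Finset.card_univ]
    _ ≤ _ := by gcongr

lemma subboxMass_mul_le {c : ℝ} (hc : 1 ≤ c) (S : ℝ) :
    subboxMass ι (c * S) ≤
      ENNReal.ofReal (c ^ (2 * Fintype.card ι) * Real.exp ((c - 1) * S)) * subboxMass ι S := by
  have hc₀ : 0 < c := by linarith
  set f : (ι → ℝ) → ℝ≥0∞ := fun u => ∏ i, ENNReal.ofReal (Real.exp (u i) - 1)
  have preimage_smul : (c • ·) ⁻¹' {u : ι → ℝ | ∑ i, u i ≤ c * S} = {u | ∑ i, u i ≤ S} := by
    ext u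
    simp only [Set.mem_preimage, Set.mem_ofPred_eq, Pi.smul_apply, smul_eq_mul, ← Finset.mul_sum]
    exact mul_le_mul_iff_right₀ hc₀
  rw [subboxMass, setLIntegral_eq_mul_setLIntegral_smul hc₀ (by fun_prop)
    (measurableSet_sum_le _), preimage_smul]
  calc _ ≤ ENNReal.ofReal (c ^ Fintype.card ι) *
        ∫⁻ u in {u : ι → ℝ | ∑ i, u i ≤ S},
          ENNReal.ofReal (c ^ Fintype.card ι * Real.exp ((c - 1) * S)) * f u := by
        gcongr _ * ?_
        exact setLIntegral_mono' (measurableSet_sum_le S)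
          fun u hu => prod_ofReal_exp_smul_sub_one_le hc hu
    _ = _ := by
        rw [lintegral_const_mul' _ _ ENNReal.ofReal_ne_top, ← mul_assoc,
          ← ENNReal.ofReal_mul (by positivity), ← mul_assoc, ← pow_add, ← two_mul]
        rfl

lemma subboxMass_le {S T : ℝ} (hS : 0 < S) (hST : S ≤ T) :
    subboxMass ι T ≤
      ENNReal.ofReal ((T / S) ^ (2 * Fintype.card ι) * Real.exp (T - S)) * subboxMass ι S := by
  have := subboxMass_mul_le (ι := ι) ((one_le_div hS).2 hST) S
  rwa [sub_one_mul, div_mul_cancel₀ T hS.ne'] at this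

end SubboxMass

section BoxMeasure

variable {ι : Type*} [Fintype ι]

lemma boxMeasure_subboxes_ne_top (I : Box ι) {s : ℝ} (hs : 0 < s) :
    boxMeasure ι (subboxes I s) ≠ ∞ :=
  boxMeasure_subboxes I hs ▸ (subboxMass_lt_top _).ne

lemma boxMeasure_subboxes_ne_zero (I : Box ι) {s : ℝ} (hs : 0 < s) (hsI : s < boxVol I) :
    boxMeasure ι (subboxes I s) ≠ 0 :=
  boxMeasure_subboxes I hs ▸ (subboxMass_pos (Real.log_pos ((one_lt_div hs).2 hsI))).ne'

lemma boxMeasure_real_subboxes_le {I J : Box ι} {s t : ℝ} (hs : 0 < s) (hsI : s < boxVol I)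
    (ht : 0 < t) (hratio : boxVol I / s ≤ boxVol J / t) :
    (boxMeasure ι).real (subboxes J t) ≤
      (Real.log (boxVol J / t) / Real.log (boxVol I / s)) ^ (2 * Fintype.card ι) *
        (boxVol J / t / (boxVol I / s)) * (boxMeasure ι).real (subboxes I s) := by
  have one_lt_ratio : 1 < boxVol I / s := (one_lt_div hs).2 hsI
  have ratio_pos : 0 < boxVol J / t := div_pos (boxVol_pos J) ht
  have log_le_log := Real.log_le_log (by positivity) hratio
  have log_pos := Real.log_pos one_lt_ratio
  have log_nonneg := log_pos.le.trans log_le_log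
  have mass_le := subboxMass_le (ι := ι) log_pos log_le_log
  rw [Real.exp_sub, Real.exp_log ratio_pos, Real.exp_log (by positivity)] at mass_le
  rw [Measure.real, Measure.real, boxMeasure_subboxes J ht, boxMeasure_subboxes I hs,
    ← ENNReal.toReal_ofReal (r := _ ^ _ * _) (by positivity), ← ENNReal.toReal_mul]
  exact ENNReal.toReal_mono
    (ENNReal.mul_ne_top ENNReal.ofReal_ne_top (subboxMass_lt_top _).ne) mass_le

end BoxMeasure

section PackingAndCovering

variable {α β : Type*}

open Finset in
lemma card_le_of_pairwiseDisjoint [MeasurableSpace β] {μ : Measure β} {A : α → Set β}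
    {v : Finset α} {Y : Set β} {K : ℝ} (hdisj : (v : Set α).PairwiseDisjoint A)
    (hA : ∀ a ∈ v, MeasurableSet (A a)) (hAY : ∀ a ∈ v, A a ⊆ Y) (hY₀ : μ Y ≠ 0) (hY : μ Y ≠ ∞)
    (hK₀ : 0 ≤ K) (hK : ∀ a ∈ v, μ.real Y ≤ K * μ.real (A a)) : (#v : ℝ) ≤ K := by
  refine le_of_mul_le_mul_right ?_ (ENNReal.toReal_pos hY₀ hY)
  calc (#v : ℝ) * μ.real Y = ∑ _a ∈ v, μ.real Y := by rw [sum_const, nsmul_eq_mul]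
    _ ≤ ∑ a ∈ v, K * μ.real (A a) := sum_le_sum hK
    _ = K * μ.real (⋃ a ∈ v, A a) := by
        rw [← mul_sum, measureReal_biUnion_finset hdisj hA
          fun a ha => measure_ne_top_of_subset (hAY a ha) hY]
    _ ≤ K * μ.real Y :=
        mul_le_mul_of_nonneg_left (measureReal_mono (Set.iUnion₂_subset hAY) hY) hK₀

-- A maximal disjoint subfamily has the required property.
open Finset in
lemma exists_finset_forall_inter_nonempty [MeasurableSpace β] {μ : Measure β} {A : α → Set β}
    {t : Set α} {Y : Set β} {K : ℝ} (hA : ∀ a ∈ t, MeasurableSet (A a)) (hAY : ∀ a ∈ t, A a ⊆ Y)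
    (hY₀ : μ Y ≠ 0) (hY : μ Y ≠ ∞) (hK₀ : 0 ≤ K) (hK : ∀ a ∈ t, μ.real Y ≤ K * μ.real (A a)) :
    ∃ u : Finset α, ↑u ⊆ t ∧ (#u : ℝ) ≤ K ∧ ∀ a ∈ t, ∃ b ∈ u, (A a ∩ A b).Nonempty := by
  have nonempty (a : α) (ha : a ∈ t) : (A a).Nonempty := by
    refine Set.nonempty_iff_ne_empty.2 fun hempty => ?_
    have := hK a ha
    rw [hempty, measureReal_empty, mul_zero] at this
    exact this.not_gt (ENNReal.toReal_pos hY₀ hY)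
  obtain ⟨u, hut, hdisj, hmeet⟩ := Vitali.exists_disjoint_subfamily_covering_enlargement A t
    (fun _ => 1) 2 one_lt_two (fun _ _ => zero_le_one) 1 (fun _ _ => le_rfl) nonempty
  have card_le (v : Finset α) (hv : ↑v ⊆ u) : (#v : ℝ) ≤ K :=
    card_le_of_pairwiseDisjoint (hdisj.subset hv) (fun a ha => hA a (hut (hv ha)))
      (fun a ha => hAY a (hut (hv ha))) hY₀ hY hK₀ fun a ha => hK a (hut (hv ha))
  have finite : u.Finite := by
    by_contra hinf
    obtain ⟨v, hvu, hv⟩ := Set.Infinite.exists_subset_card_eq hinf (⌊K⌋₊ + 1)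
    exact (Nat.lt_of_floor_lt (hv ▸ Nat.lt_succ_self _)).not_ge (card_le v hvu)
  lift u to Finset α using finite
  exact ⟨u, hut, card_le u subset_rfl, fun a ha =>
    let ⟨b, hb, hab, _⟩ := hmeet a ha
    ⟨b, hb, hab⟩⟩

open Finset in
lemma exists_card_le_mul_card_filter_mem [MeasurableSpace β] {μ : Measure β} {A : α → Set β}
    {s : Finset α} {Y : Set β} {R : ℝ} (hA : ∀ a ∈ s, MeasurableSet (A a))
    (hAY : ∀ a ∈ s, A a ⊆ Y) (hY₀ : μ Y ≠ 0) (hY : μ Y ≠ ∞) (hR₀ : 0 ≤ R)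
    (hR : ∀ a ∈ s, μ.real Y ≤ R * μ.real (A a)) [∀ y, DecidablePred (y ∈ A ·)] :
    ∃ y ∈ Y, (#s : ℝ) ≤ R * #{a ∈ s | y ∈ A a} := by
  have count_eq (y : β) :
      (#{a ∈ s | y ∈ A a} : ℝ) = ∑ a ∈ s, (A a).indicator (fun _ => (1 : ℝ)) y := by
    simp only [card_filter, Nat.cast_sum, Nat.cast_ite, Nat.cast_one, Nat.cast_zero,
      Set.indicator_apply]
  have integrable (a : α) (ha : a ∈ s) :
      IntegrableOn ((A a).indicator fun _ => (1 : ℝ)) Y μ :=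
    (integrableOn_const hY).indicator (hA a ha)
  have Y_pos : 0 < μ.real Y := ENNReal.toReal_pos hY₀ hY
  obtain ⟨y, hy, average_le⟩ := exists_setAverage_le hY₀ hY (integrable_finsetSum s integrable)
  refine ⟨y, hy, ?_⟩
  calc (#s : ℝ) ≤ R * ((μ.real Y)⁻¹ * ∑ a ∈ s, μ.real (A a)) := by
        rw [mul_left_comm, le_inv_mul_iff₀ Y_pos, mul_sum, mul_comm,
          ← nsmul_eq_mul, ← sum_const]
        exact sum_le_sum hR
    _ = R * ⨍ y in Y, ∑ a ∈ s, (A a).indicator (fun _ => (1 : ℝ)) y ∂μ := by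
        rw [setAverage_eq, smul_eq_mul, integral_finsetSum s integrable]
        congr 2
        refine sum_congr rfl fun a ha => ?_
        rw [setIntegral_indicator (hA a ha), Set.inter_eq_self_of_subset_right (hAY a ha),
          setIntegral_const, smul_eq_mul, mul_one]
    _ ≤ R * #{a ∈ s | y ∈ A a} := by
        rw [count_eq]
        exact mul_le_mul_of_nonneg_left average_le hR₀

open Finset in
lemma exists_finset_card_filter_forall_notMem_le {A : α → Set β} {s : Finset α}
    {Y : Set β} [∀ y, DecidablePred (y ∈ A ·)] {q : ℝ} (hq : 0 ≤ q)
    (h : ∀ t ⊆ s, ∃ y ∈ Y, (#{a ∈ t | y ∉ A a} : ℝ) ≤ q * #t) (n : ℕ) :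
    ∃ N : Finset β, ↑N ⊆ Y ∧ #N ≤ n ∧
      (#{a ∈ s | ∀ y ∈ N, y ∉ A a} : ℝ) ≤ q ^ n * #s := by
  classical
  induction n with
  | zero => exact ⟨∅, by simp⟩
  | succ n ih =>
    obtain ⟨N, hNY, hN, hcard⟩ := ih
    obtain ⟨y, hy, hcard_y⟩ := h {a ∈ s | ∀ y ∈ N, y ∉ A a} (filter_subset _ _)
    refine ⟨insert y N, ?_, (card_insert_le y N).trans (Nat.succ_le_succ hN), ?_⟩
    · rw [coe_insert]
      exact Set.insert_subset hy hNY
    · have filter_eq : {a ∈ s | ∀ z ∈ insert y N, z ∉ A a} =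
          {a ∈ {a ∈ s | ∀ y ∈ N, y ∉ A a} | y ∉ A a} := by
        ext a
        simp only [mem_filter, forall_mem_insert]
        tauto
      rw [filter_eq, pow_succ', mul_assoc]
      exact hcard_y.trans (mul_le_mul_of_nonneg_left hcard hq)

open Finset in
lemma exists_finset_card_filter_le_exp_mul [MeasurableSpace β] {μ : Measure β} {A : α → Set β}
    {s : Finset α} {Y : Set β} {R t : ℝ} (hA : ∀ a ∈ s, MeasurableSet (A a))
    (hAY : ∀ a ∈ s, A a ⊆ Y) (hY₀ : μ Y ≠ 0) (hY : μ Y ≠ ∞) (hR₁ : 1 ≤ R)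
    (hR : ∀ a ∈ s, μ.real Y ≤ R * μ.real (A a)) [∀ y, DecidablePred (y ∈ A ·)] :
    ∃ N : Finset β, ↑N ⊆ Y ∧ #N ≤ ⌈R * t⌉₊ ∧
      (#{a ∈ s | ∀ y ∈ N, y ∉ A a} : ℝ) ≤ Real.exp (-t) * #s := by
  have hR₀ : 0 < R := zero_lt_one.trans_le hR₁
  have exists_good_point (v : Finset α) (hv : v ⊆ s) :
      ∃ y ∈ Y, (#{a ∈ v | y ∉ A a} : ℝ) ≤ (1 - R⁻¹) * #v := by
    obtain ⟨y, hy, hcard⟩ := exists_card_le_mul_card_filter_mem (fun a ha => hA a (hv ha))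
      (fun a ha => hAY a (hv ha)) hY₀ hY hR₀.le fun a ha => hR a (hv ha)
    refine ⟨y, hy, ?_⟩
    have split : (#{a ∈ v | y ∈ A a} + #{a ∈ v | y ∉ A a} : ℝ) = #v :=
      mod_cast card_filter_add_card_filter_not (s := v) (y ∈ A ·)
    linarith [(inv_mul_le_iff₀ hR₀).2 hcard]
  obtain ⟨N, hNY, hN, hcard⟩ := exists_finset_card_filter_forall_notMem_le
    (sub_nonneg.2 (inv_le_one_of_one_le₀ hR₁)) exists_good_point ⌈R * t⌉₊
  refine ⟨N, hNY, hN, hcard.trans (mul_le_mul_of_nonneg_right ?_ (Nat.cast_nonneg _))⟩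
  calc (1 - R⁻¹) ^ ⌈R * t⌉₊ ≤ Real.exp (-R⁻¹) ^ ⌈R * t⌉₊ := by
        gcongr
        · exact sub_nonneg.2 (inv_le_one_of_one_le₀ hR₁)
        · exact Real.one_sub_le_exp_neg _
    _ = Real.exp (-(R⁻¹ * ⌈R * t⌉₊)) := by rw [← Real.exp_nat_mul, mul_comm, neg_mul]
    _ ≤ Real.exp (-t) := by
        gcongr
        exact (le_inv_mul_iff₀ hR₀).2 (Nat.le_ceil _)

end PackingAndCovering

section BoxApproximation

variable {ι : Type*} [Fintype ι]

/-- `𝒩` is a `δ`-approximation for the family of boxes in the unit cube of volume at least `ε`.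
Members of volume less than `δ` serve no purpose, so all members are required to have volume at
least `δ`. -/
structure IsBoxApproximation (𝒩 : Finset (Box ι)) (ε δ : ℝ) : Prop where
  le_unitBox : ∀ J ∈ 𝒩, J ≤ unitBox ι
  le_boxVol : ∀ J ∈ 𝒩, δ ≤ boxVol J
  exists_le : ∀ I ≤ unitBox ι, ε ≤ boxVol I → ∃ J ∈ 𝒩, J ≤ I

lemma IsBoxApproximation.mono {𝒩 : Finset (Box ι)} {ε δ δ' : ℝ} (h : IsBoxApproximation 𝒩 ε δ)
    (hδ : δ' ≤ δ) : IsBoxApproximation 𝒩 ε δ' :=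
  ⟨h.le_unitBox, fun J hJ => hδ.trans (h.le_boxVol J hJ), h.exists_le⟩

open Classical in
lemma isBoxApproximation_image_coreBox {ε κ : ℝ} (hκ₀ : 0 ≤ κ) (hκ : κ < 1 / 2)
    {X : Finset (Box ι)} (hX : ∀ I ∈ X, I ≤ unitBox ι ∧ ε ≤ boxVol I)
    (hcore : ∀ I ≤ unitBox ι, ε ≤ boxVol I → ∃ J ∈ X, coreBox J κ hκ ≤ I) :
    IsBoxApproximation (X.image (coreBox · κ hκ)) ε ((1 - 2 * κ) ^ Fintype.card ι * ε) where
  le_unitBox := Finset.forall_mem_image.2 fun I hI => (coreBox_le I hκ₀ hκ).trans (hX I hI).1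
  le_boxVol := Finset.forall_mem_image.2 fun I hI => by
    have : 0 ≤ 1 - 2 * κ := by linarith
    rw [boxVol_coreBox]
    gcongr
    exact (hX I hI).2
  exists_le I hI hεI := by
    obtain ⟨J, hJ, hJI⟩ := hcore I hI hεI
    exact ⟨_, Finset.mem_image_of_mem _ hJ, hJI⟩

lemma isBoxApproximation_singleton_coreBox {ε : ℝ} (hε : 1 / 2 < ε) (hε₁ : ε ≤ 1) :
    IsBoxApproximation {coreBox (unitBox ι) (1 - ε) (by linarith)} ε
      ((2 * ε - 1) ^ Fintype.card ι) where
  le_unitBox := by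
    simp only [Finset.mem_singleton, forall_eq]
    exact coreBox_le _ (by linarith) _
  le_boxVol := by
    simp only [Finset.mem_singleton, forall_eq, boxVol_coreBox, boxVol_unitBox, mul_one]
    exact le_of_eq (by ring)
  exists_le I hI hεI := by
    refine ⟨_, Finset.mem_singleton_self _, coreBox_le_of_boxVol_le hI _ ?_⟩
    rwa [boxVol_unitBox, mul_one, sub_sub_cancel]

lemma coreBox_le_of_subboxes_inter_nonempty {I J : Box ι} {κ s : ℝ} (hκ : κ < 1 / 2)
    (h : (subboxes I s ∩ subboxes J (Real.exp (-κ) * boxVol J)).Nonempty) :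
    coreBox J κ hκ ≤ I := by
  obtain ⟨p, ⟨hpI, -⟩, hpJ, hvol⟩ := h
  refine (coreBox_le_of_boxVol_le hpJ hκ (le_trans ?_ hvol)).trans hpI
  gcongr
  · exact (boxVol_pos J).le
  · exact Real.one_sub_le_exp_neg κ

lemma boxMeasure_real_subboxes_unitBox_le_exp (I : Box ι) {ε κ : ℝ} (hε : 0 < ε) (hε₁ : ε ≤ 1)
    (hκ : 0 < κ) :
    (boxMeasure ι).real (subboxes (unitBox ι) (Real.exp (-κ) * ε)) ≤
      (1 + Real.log ε⁻¹ / κ) ^ (2 * Fintype.card ι) * ε⁻¹ *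
        (boxMeasure ι).real (subboxes I (Real.exp (-κ) * boxVol I)) := by
  have ratio_eq : boxVol I / (Real.exp (-κ) * boxVol I) = Real.exp κ := by
    rw [div_mul_cancel_right₀ (boxVol_pos I).ne', Real.exp_neg, inv_inv]
  have unit_ratio_eq : boxVol (unitBox ι) / (Real.exp (-κ) * ε) = Real.exp κ * ε⁻¹ := by
    rw [boxVol_unitBox, one_div, mul_inv, Real.exp_neg, inv_inv]
  have ratio_le : boxVol I / (Real.exp (-κ) * boxVol I) ≤
      boxVol (unitBox ι) / (Real.exp (-κ) * ε) := by
    rw [ratio_eq, unit_ratio_eq]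
    exact le_mul_of_one_le_right (Real.exp_pos κ).le (one_le_inv_iff₀.2 ⟨hε, hε₁⟩)
  have key := boxMeasure_real_subboxes_le (mul_pos (Real.exp_pos (-κ)) (boxVol_pos I))
    (mul_lt_of_lt_one_left (boxVol_pos I) (Real.exp_lt_one_iff.2 (neg_neg_of_pos hκ)))
    (by positivity) ratio_le
  rwa [ratio_eq, unit_ratio_eq, Real.log_mul (Real.exp_ne_zero κ) (inv_ne_zero hε.ne'),
    Real.log_exp, add_div, div_self hκ.ne', mul_div_cancel_left₀ _ (Real.exp_ne_zero κ)] at key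

theorem exists_isBoxApproximation_card_le_packing {ε κ : ℝ} (hε : 0 < ε) (hε₁ : ε ≤ 1)
    (hκ₀ : 0 < κ) (hκ : κ < 1 / 2) :
    ∃ X : Finset (Box ι), IsBoxApproximation X ε ((1 - 2 * κ) ^ Fintype.card ι * ε) ∧
      (X.card : ℝ) ≤ (1 + Real.log ε⁻¹ / κ) ^ (2 * Fintype.card ι) * ε⁻¹ := by
  classical
  have threshold_pos : 0 < Real.exp (-κ) * ε := by positivity
  have threshold_lt : Real.exp (-κ) * ε < boxVol (unitBox ι) := by
    rw [boxVol_unitBox]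
    exact mul_lt_one_of_nonneg_of_lt_one_left (Real.exp_pos _).le
      (Real.exp_lt_one_iff.2 (neg_neg_of_pos hκ₀)) hε₁
  have log_nonneg : 0 ≤ Real.log ε⁻¹ := Real.log_nonneg (one_le_inv_iff₀.2 ⟨hε, hε₁⟩)
  obtain ⟨X, hX, hcard, hmeet⟩ := exists_finset_forall_inter_nonempty
    (t := {I : Box ι | I ≤ unitBox ι ∧ ε ≤ boxVol I})
    (fun I _ => measurableSet_subboxes I _)
    (fun I hI => subboxes_subset hI.1 (mul_le_mul_of_nonneg_left hI.2 (Real.exp_pos _).le))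
    (boxMeasure_subboxes_ne_zero _ threshold_pos threshold_lt)
    (boxMeasure_subboxes_ne_top _ threshold_pos) (by positivity)
    (fun I _ => boxMeasure_real_subboxes_unitBox_le_exp I hε hε₁ hκ₀)
  refine ⟨X.image (coreBox · κ hκ), isBoxApproximation_image_coreBox hκ₀.le hκ hX ?_,
    (Nat.cast_le.2 Finset.card_image_le).trans hcard⟩
  intro I hI hεI
  obtain ⟨J, hJ, hIJ⟩ := hmeet I ⟨hI, hεI⟩
  exact ⟨J, hJ, coreBox_le_of_subboxes_inter_nonempty hκ hIJ⟩

open Finset Classical in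
lemma IsBoxApproximation.image_logBox_union {X : Finset (Box ι)} {ε ε' δ : ℝ}
    (hX : IsBoxApproximation X ε ε') (hδ : δ ≤ ε') {N : Finset ((ι → ℝ) × (ι → ℝ))}
    (hN : ↑N ⊆ subboxes (unitBox ι) δ) :
    IsBoxApproximation (N.image logBox ∪ {I ∈ X | ∀ p ∈ N, p ∉ subboxes I δ}) ε δ where
  le_unitBox := forall_mem_union.2 ⟨forall_mem_image.2 fun _ hp => (hN hp).1,
    fun I hI => hX.le_unitBox I (mem_filter.1 hI).1⟩
  le_boxVol := forall_mem_union.2 ⟨forall_mem_image.2 fun _ hp => (hN hp).2,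
    fun I hI => hδ.trans (hX.le_boxVol I (mem_filter.1 hI).1)⟩
  exists_le I hI hεI := by
    obtain ⟨J, hJ, hJI⟩ := hX.exists_le I hI hεI
    by_cases hmiss : ∀ p ∈ N, p ∉ subboxes J δ
    · exact ⟨J, mem_union_right _ (mem_filter.2 ⟨hJ, hmiss⟩), hJI⟩
    · push Not at hmiss
      obtain ⟨p, hp, hpJ, -⟩ := hmiss
      exact ⟨logBox p, mem_union_left _ (mem_image_of_mem _ hp), hpJ.trans hJI⟩

lemma boxMeasure_real_subboxes_unitBox_le {I : Box ι} {ε δ R : ℝ} (hδ₀ : 0 < δ) (hδ : δ < ε)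
    (hI : I ≤ unitBox ι) (hεI : ε ≤ boxVol I)
    (hR : (Real.log δ⁻¹ / Real.log (ε / δ)) ^ (2 * Fintype.card ι) * ε⁻¹ ≤ R) :
    (boxMeasure ι).real (subboxes (unitBox ι) δ) ≤ R * (boxMeasure ι).real (subboxes I δ) := by
  have hvol : boxVol I ≤ boxVol (unitBox ι) := boxVol_mono hI
  have hε : 0 < ε := hδ₀.trans hδ
  have vol_pos := boxVol_pos I
  have log_pos : 0 < Real.log (ε / δ) := Real.log_pos ((one_lt_div hδ₀).2 hδ)
  have log_nonneg : 0 ≤ Real.log δ⁻¹ :=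
    Real.log_nonneg ((one_le_inv₀ hδ₀).2
      (hδ.le.trans (hεI.trans (hvol.trans_eq boxVol_unitBox))))
  have hlog : Real.log (ε / δ) ≤ Real.log (boxVol I / δ) :=
    Real.log_le_log (by positivity) (by gcongr)
  have log_vol_pos := log_pos.trans_le hlog
  refine (boxMeasure_real_subboxes_le hδ₀ (hδ.trans_le hεI) hδ₀ (by gcongr)).trans
    (mul_le_mul_of_nonneg_right (le_trans ?_ hR) measureReal_nonneg)
  rw [div_div_div_cancel_right₀ hδ₀.ne', boxVol_unitBox, one_div, one_div]
  gcongr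

theorem IsBoxApproximation.exists_card_le {X : Finset (Box ι)} {ε ε' δ R t : ℝ}
    (hX : IsBoxApproximation X ε ε') (hδ₀ : 0 < δ) (hδ : δ < ε') (hε' : ε' ≤ 1) (ht : 0 ≤ t)
    (hR : (Real.log δ⁻¹ / Real.log (ε' / δ)) ^ (2 * Fintype.card ι) * ε'⁻¹ ≤ R)
    (hcard : (X.card : ℝ) ≤ R * Real.exp t) :
    ∃ 𝒩 : Finset (Box ι), IsBoxApproximation 𝒩 ε δ ∧ (𝒩.card : ℝ) ≤ R * (t + 1) + 1 := by
  classical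
  have hδ₁ : δ < 1 := hδ.trans_le hε'
  have log_le_log : Real.log (ε' / δ) ≤ Real.log δ⁻¹ :=
    Real.log_le_log (div_pos (hδ₀.trans hδ) hδ₀) ((div_eq_mul_inv ε' δ).trans_le
      (mul_le_of_le_one_left (inv_pos.2 hδ₀).le hε'))
  have hR₁ : 1 ≤ R := (one_le_mul_of_one_le_of_one_le (one_le_pow₀
    ((one_le_div (Real.log_pos ((one_lt_div hδ₀).2 hδ))).2 log_le_log))
    ((one_le_inv₀ (hδ₀.trans hδ)).2 hε')).trans hR
  obtain ⟨N, hN, hN_card, huncovered⟩ := exists_finset_card_filter_le_exp_mul (t := t)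
    (fun I _ => measurableSet_subboxes I δ)
    (fun I hI => subboxes_subset (hX.le_unitBox I hI) le_rfl)
    (boxMeasure_subboxes_ne_zero _ hδ₀ (hδ₁.trans_eq boxVol_unitBox.symm))
    (boxMeasure_subboxes_ne_top _ hδ₀) hR₁
    (fun I hI => boxMeasure_real_subboxes_unitBox_le hδ₀ hδ (hX.le_unitBox I hI)
      (hX.le_boxVol I hI) hR)
  refine ⟨_, hX.image_logBox_union hδ.le hN, ?_⟩
  calc _ ≤ (N.card : ℝ) + (X.filter fun I => ∀ p ∈ N, p ∉ subboxes I δ).card :=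
        mod_cast (Finset.card_union_le _ _).trans (Nat.add_le_add_right Finset.card_image_le _)
    _ ≤ (R * t + 1) + Real.exp (-t) * (R * Real.exp t) := by
        gcongr
        · exact (Nat.cast_le.2 hN_card).trans
            (Nat.ceil_lt_add_one (mul_nonneg (zero_le_one.trans hR₁) ht)).le
        · exact huncovered.trans (mul_le_mul_of_nonneg_left hcard (Real.exp_pos _).le)
    _ = R * (t + 1) + 1 := by
        rw [mul_left_comm, ← Real.exp_add, neg_add_cancel, Real.exp_zero]
        ring

end BoxApproximation

section Estimates

lemma sq_one_add_half_mul_le_pow {d : ℕ} (hd : 2 ≤ d) {s : ℝ} (hs : -1 ≤ s)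
    (hs' : 0 ≤ 1 + d / 2 * s) : (1 + d / 2 * s) ^ 2 ≤ (1 + s) ^ d := by
  have hd' : (1 : ℝ) ≤ d / 2 := by
    rw [le_div_iff₀ two_pos, one_mul]
    exact_mod_cast hd
  calc (1 + d / 2 * s) ^ 2 ≤ ((1 + s) ^ (d / 2 : ℝ)) ^ 2 := by
        gcongr
        exact one_add_mul_self_le_rpow_one_add hs hd'
    _ = (1 + s) ^ d := by
        rw [← Real.rpow_mul_natCast (by linarith), Nat.cast_ofNat, div_mul_cancel₀ _ two_ne_zero,
          Real.rpow_natCast]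

lemma one_add_three_mul_mul_le {g L x : ℝ} (hg : 0 ≤ g) (hx : 0 ≤ x) (hxL : x ≤ L)
    (hx' : x ≤ 1 / 4) : (1 + 3 * x) * (g * (1 + g + L)) ≤ (g + L) * (1 + g) ^ 2 := by
  have cubic_nonneg : 0 ≤ g ^ 3 + g ^ 2 / 2 - 11 / 16 * g + 1 / 4 := by
    nlinarith [mul_nonneg hg (sq_nonneg (g - 1 / 3)), sq_nonneg (g - 1 / 3)]
  -- In the case `L = x`, replacing `x ^ 2` by `x / 4` leaves an affine inequality in `x`.
  have affine_bound : 0 ≤ (1 - 4 * x) * (g ^ 3 + g ^ 2) +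
      4 * x * (g ^ 3 + g ^ 2 / 2 - 11 / 16 * g + 1 / 4) :=
    add_nonneg (mul_nonneg (by linarith) (by positivity)) (mul_nonneg (by positivity) cubic_nonneg)
  have concavity : 0 ≤ g * (x * (1 / 4 - x)) := by
    have : 0 ≤ 1 / 4 - x := by linarith
    positivity
  have slope_nonneg : 0 ≤ 1 + g + g ^ 2 - 3 * x * g := by nlinarith
  nlinarith [mul_nonneg (sub_nonneg.2 hxL) slope_nonneg]

lemma one_add_three_mul_mul_sq_le {γ L x : ℝ} (hγ : 0 < γ) (hx : 0 < x) (hxL : x ≤ L)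
    (hx' : x ≤ 1 / 4) :
    (1 + 3 * x) * (1 + L / (1 + γ * L)) ^ 2 ≤ (1 + 1 / γ) * (1 + (1 + γ) * L) := by
  have hL : 0 < L := hx.trans_le hxL
  have cleared : (1 + 3 * x) * (γ * (1 + (1 + γ) * L)) ≤ (1 + γ) * (1 + γ * L) ^ 2 := by
    refine le_of_mul_le_mul_left ?_ hL
    linarith [one_add_three_mul_mul_le (mul_pos hγ hL).le hx.le hxL hx']
  have base_eq : 1 + L / (1 + γ * L) = (1 + (1 + γ) * L) / (1 + γ * L) := by
    field_simp
    ring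
  rw [base_eq, one_add_div hγ.ne', div_pow, mul_div_assoc', div_mul_eq_mul_div,
    div_le_div_iff₀ (by positivity) hγ]
  nlinarith [mul_le_mul_of_nonneg_right cleared (show 0 ≤ 1 + (1 + γ) * L by positivity)]

lemma three_mul_pow_le {d : ℕ} (hd : 2 ≤ d) {γ L : ℝ} (hγ : 0 < γ) (hL : 1 / (2 * d) ≤ L) :
    3 * (1 + L / (1 + γ * L)) ^ (2 * d) ≤ ((1 + 1 / γ) * (1 + (1 + γ) * L)) ^ d := by
  have hd' : (2 : ℝ) ≤ d := mod_cast hd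
  have hL₀ : 0 ≤ L := le_trans (by positivity) hL
  have three_le : (3 : ℝ) ≤ (1 + 3 * (1 / (2 * d))) ^ d := by
    refine le_trans ?_ (sq_one_add_half_mul_le_pow hd ?_ ?_)
    · field_simp
      norm_num
    · exact le_trans (by norm_num) (by positivity : (0 : ℝ) ≤ 3 * (1 / (2 * d)))
    · positivity
  have quarter : 1 / (2 * (d : ℝ)) ≤ 1 / 4 :=
    one_div_le_one_div_of_le (by norm_num) (by linarith)
  calc 3 * (1 + L / (1 + γ * L)) ^ (2 * d)
      ≤ (1 + 3 * (1 / (2 * d))) ^ d * ((1 + L / (1 + γ * L)) ^ 2) ^ d := by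
        rw [pow_mul]
        gcongr
    _ = ((1 + 3 * (1 / (2 * d))) * (1 + L / (1 + γ * L)) ^ 2) ^ d := (mul_pow _ _ _).symm
    _ ≤ _ := pow_le_pow_left₀ (by positivity)
        (one_add_three_mul_mul_sq_le hγ (by positivity) hL quarter) d

lemma exp_neg_le_one_sub_pow {d : ℕ} (hd : 1 ≤ d) :
    Real.exp (-(1 / (15 * d))) ≤ (1 - 2 * (1 / (32 * (d : ℝ) ^ 2))) ^ d := by
  have hd' : (1 : ℝ) ≤ d := mod_cast hd
  calc Real.exp (-(1 / (15 * d))) = Real.exp (-(1 / (15 * (d : ℝ) ^ 2))) ^ d := by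
        rw [← Real.exp_nat_mul]
        congr 1
        field_simp
    _ ≤ (1 - 2 * (1 / (32 * (d : ℝ) ^ 2))) ^ d := by
        gcongr
        calc Real.exp (-(1 / (15 * (d : ℝ) ^ 2))) = (Real.exp (1 / (15 * (d : ℝ) ^ 2)))⁻¹ :=
              Real.exp_neg _
          _ ≤ (1 / (15 * (d : ℝ) ^ 2) + 1)⁻¹ := by
              gcongr
              exact Real.add_one_le_exp _
          _ ≤ _ := by
              rw [inv_le_iff_one_le_mul₀ (by positivity)]
              field_simp
              nlinarith

lemma div_sub_pow_mul_exp_le (n : ℕ) {a L U β : ℝ} (ha : 1 ≤ a) (hL : 0 ≤ L) (hβ : 0 ≤ β)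
    (hU : a + β ≤ U) :
    ((L + U) / (U - β)) ^ n * Real.exp (L + β) ≤
      Real.exp ((n + 1) * β) * (1 + L / a) ^ n * Real.exp L := by
  have hUβ : a ≤ U - β := by linarith
  have hUβ₀ : 0 < U - β := by linarith
  have ratio_le : (L + U) / (U - β) ≤ Real.exp β * (1 + L / a) :=
    calc (L + U) / (U - β) = 1 + β / (U - β) + L / (U - β) := by
          field_simp
          ring
      _ ≤ 1 + β / 1 + (1 + β) * (L / a) := by
          have : L / (U - β) ≤ L / a := by gcongr
          have : 0 ≤ β * (L / a) := by positivity
          have : β / (U - β) ≤ β / 1 := by gcongr; linarith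
          linarith
      _ = (β + 1) * (1 + L / a) := by ring
      _ ≤ Real.exp β * (1 + L / a) := by
          gcongr
          exact Real.add_one_le_exp β
  calc ((L + U) / (U - β)) ^ n * Real.exp (L + β)
      ≤ (Real.exp β * (1 + L / a)) ^ n * Real.exp (L + β) := by
        gcongr
        exact div_nonneg (by linarith) hUβ₀.le
    _ = _ := by
        rw [mul_pow, ← Real.exp_nat_mul, add_one_mul, Real.exp_add, Real.exp_add]
        ring

lemma one_add_mul_pow_le {d : ℕ} (hd : 2 ≤ d) {γ L : ℝ} (hγ : 0 < γ) (hL : 0 ≤ L) :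
    (1 + L / (1 / (32 * (d : ℝ) ^ 2))) ^ (2 * d) ≤
      (1 + L / (1 + γ * L)) ^ (2 * d) * Real.exp (2 * d * (7 * Real.log d + γ * L)) := by
  have hd' : (2 : ℝ) ≤ d := mod_cast hd
  have exp_eq : Real.exp (2 * d * (7 * Real.log d + γ * L)) =
      ((d : ℝ) ^ 7 * Real.exp (γ * L)) ^ (2 * d) := by
    rw [← Real.rpow_natCast (d : ℝ) 7, Real.rpow_def_of_pos (by positivity), ← Real.exp_add,
      ← Real.exp_nat_mul]
    push_cast
    ring_nf
  have one_le_pow : 1 ≤ (d : ℝ) ^ 7 := one_le_pow₀ (by linarith)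
  have mul_sq_le_pow : 32 * (d : ℝ) ^ 2 ≤ d ^ 7 := by
    have : (2 : ℝ) ^ 5 ≤ d ^ 5 := by gcongr
    nlinarith [sq_nonneg (d : ℝ)]
  have one_add_le : 1 + L ≤ (1 + L / (1 + γ * L)) * Real.exp (γ * L) :=
    calc 1 + L ≤ (1 + L / (1 + γ * L)) * (γ * L + 1) := by
          field_simp
          nlinarith [mul_nonneg hγ.le hL]
      _ ≤ _ := by
          gcongr
          exact Real.add_one_le_exp _
  rw [exp_eq, ← mul_pow]
  gcongr
  calc 1 + L / (1 / (32 * (d : ℝ) ^ 2)) = 1 + 32 * (d : ℝ) ^ 2 * L := by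
        rw [div_div_eq_mul_div, div_one, mul_comm]
    _ ≤ (d : ℝ) ^ 7 + d ^ 7 * L := by gcongr
    _ = (d : ℝ) ^ 7 * (1 + L) := by ring
    _ ≤ (d : ℝ) ^ 7 * ((1 + L / (1 + γ * L)) * Real.exp (γ * L)) := by gcongr
    _ = _ := by ring

lemma mul_add_one_add_one_le {d : ℕ} (hd : 2 ≤ d) {g P R : ℝ} (hg : 0 ≤ g) (hP : 3 ≤ P)
    (hR : R ≤ 2 / 5 * P) :
    R * (2 * d * (7 * Real.log d + g) + 1) + 1 ≤ 7 * d * Real.log d * P * Real.exp g := by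
  have hd' : (2 : ℝ) ≤ d := mod_cast hd
  have log_ge : 0.69 ≤ Real.log d :=
    (by linarith [Real.log_two_gt_d9] : 0.69 ≤ Real.log 2).trans
      (Real.log_le_log two_pos hd')
  have d_log_ge : 1.38 ≤ d * Real.log d := by nlinarith
  calc R * (2 * d * (7 * Real.log d + g) + 1) + 1
      ≤ 2 / 5 * P * (2 * d * (7 * Real.log d + g) + 1) + 1 / 3 * P := by
        gcongr
        linarith
    _ ≤ (7 * d * Real.log d) * P * (g + 1) := by
        have : 0 ≤ P * (7 / 5 * (d * Real.log d) - 11 / 15) := by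
          apply mul_nonneg <;> linarith
        have : 0 ≤ P * g * (7 * (d * Real.log d) - 4 / 5 * d) := by
          apply mul_nonneg (by positivity)
          nlinarith
        nlinarith
    _ ≤ _ := by
        gcongr
        exact Real.add_one_le_exp g

/-- The bound on the size of an approximation for boxes of volume at least `ε` in dimension `d`,
with `L = log ε⁻¹`. -/
noncomputable def approximationBound (d : ℕ) (γ L : ℝ) : ℝ :=
  7 * d * Real.log d * ((1 + 1 / γ) * (1 + (1 + γ) * L)) ^ d * Real.exp ((1 + γ) * L)

lemma approximationBound_log_inv (d : ℕ) (γ : ℝ) {ε : ℝ} (hε : 0 < ε) :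
    approximationBound d γ (Real.log ε⁻¹) =
      7 * d * Real.log d * (1 + 1 / γ) ^ d *
        (Real.log (Real.exp 1 / ε ^ (1 + γ))) ^ d / ε ^ (1 + γ) := by
  have rpow_pos := Real.rpow_pos_of_pos hε (1 + γ)
  rw [approximationBound, Real.log_div (Real.exp_ne_zero 1) rpow_pos.ne', Real.log_exp,
    Real.log_rpow hε, Real.log_inv, mul_pow, ← mul_assoc, mul_neg, ← sub_eq_add_neg,
    Real.exp_neg, mul_comm (1 + γ), ← Real.rpow_def_of_pos hε, div_eq_mul_inv _ (ε ^ (1 + γ))]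

lemma exp_two_mul_add_one_mul_le {d : ℕ} (hd : 2 ≤ d) :
    Real.exp (((2 * d : ℕ) + 1) * (1 / (15 * d))) ≤ 6 / 5 := by
  have hd' : (2 : ℝ) ≤ d := mod_cast hd
  calc Real.exp (((2 * d : ℕ) + 1) * (1 / (15 * d))) ≤ Real.exp (1 / 6) := by
        gcongr
        push_cast
        field_simp
        linarith
    _ = (Real.exp (-(1 / 6)))⁻¹ := by rw [Real.exp_neg, inv_inv]
    _ ≤ (-(1 / 6) + 1)⁻¹ := inv_anti₀ (by norm_num) (Real.add_one_le_exp _)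
    _ = 6 / 5 := by norm_num

lemma log_div_log_pow_mul_le {d : ℕ} (hd : 2 ≤ d) {γ L : ℝ} (hγ : 0 < γ) (hL : 0 ≤ L) :
    (Real.log (Real.exp (-((1 + γ) * L)) / 4)⁻¹ /
      Real.log (Real.exp (-(L + 1 / (15 * d))) / (Real.exp (-((1 + γ) * L)) / 4))) ^ (2 * d) *
        (Real.exp (-(L + 1 / (15 * d))))⁻¹ ≤
      6 / 5 * (1 + L / (1 + γ * L)) ^ (2 * d) * Real.exp L := by
  have hd' : (2 : ℝ) ≤ d := mod_cast hd
  have log_four : Real.log 4 = 2 * Real.log 2 := by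
    rw [← Real.log_rpow two_pos]
    norm_num
  have β_le : 1 / (15 * (d : ℝ)) ≤ 1 / 30 :=
    one_div_le_one_div_of_le (by norm_num) (by linarith)
  have log_numerator : Real.log (Real.exp (-((1 + γ) * L)) / 4)⁻¹ =
      L + (γ * L + Real.log 4) := by
    rw [Real.log_inv, Real.log_div (Real.exp_ne_zero _) four_ne_zero, Real.log_exp]
    ring
  have log_denominator : Real.log (Real.exp (-(L + 1 / (15 * d))) /
      (Real.exp (-((1 + γ) * L)) / 4)) = γ * L + Real.log 4 - 1 / (15 * d) := by
    rw [Real.log_div (Real.exp_ne_zero _) (by positivity),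
      Real.log_div (Real.exp_ne_zero _) four_ne_zero, Real.log_exp, Real.log_exp]
    ring
  rw [log_numerator, log_denominator, ← Real.exp_neg, neg_neg]
  refine (div_sub_pow_mul_exp_le (2 * d) (a := 1 + γ * L)
    (le_add_of_nonneg_right (by positivity)) hL (by positivity) ?_).trans ?_
  · linarith [Real.log_two_gt_d9]
  · gcongr
    exact exp_two_mul_add_one_mul_le hd

lemma mul_add_one_le_approximationBound {d : ℕ} (hd : 2 ≤ d) {γ L : ℝ} (hγ : 0 < γ)
    (hL : 1 / (2 * d) ≤ L) :
    6 / 5 * (1 + L / (1 + γ * L)) ^ (2 * d) * Real.exp L *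
        (2 * d * (7 * Real.log d + γ * L) + 1) + 1 ≤ approximationBound d γ L := by
  have hL₀ : 0 ≤ L := le_trans (by positivity) hL
  have base_le := three_mul_pow_le hd hγ hL
  have one_le_pow : 1 ≤ (1 + L / (1 + γ * L)) ^ (2 * d) :=
    one_le_pow₀ (le_add_of_nonneg_right (by positivity))
  have one_le_exp := Real.one_le_exp hL₀
  refine (mul_add_one_add_one_le hd (g := γ * L)
    (P := ((1 + 1 / γ) * (1 + (1 + γ) * L)) ^ d * Real.exp L) (by positivity) (by nlinarith)
    (by nlinarith)).trans_eq ?_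
  rw [approximationBound, one_add_mul γ L, Real.exp_add]
  ring

lemma one_le_approximationBound {d : ℕ} (hd : 2 ≤ d) {γ L : ℝ} (hγ : 0 < γ) (hL : 0 ≤ L) :
    1 ≤ approximationBound d γ L := by
  have hd' : (2 : ℝ) ≤ d := mod_cast hd
  have log_le : Real.log 2 ≤ Real.log d := Real.log_le_log two_pos hd'
  have one_le_coefficient : 1 ≤ 7 * d * Real.log d := by nlinarith [Real.log_two_gt_d9]
  have one_le_base : 1 ≤ (1 + 1 / γ) * (1 + (1 + γ) * L) :=
    one_le_mul_of_one_le_of_one_le (le_add_of_nonneg_right (by positivity))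
      (le_add_of_nonneg_right (by positivity))
  exact one_le_mul_of_one_le_of_one_le (one_le_mul_of_one_le_of_one_le one_le_coefficient
    (one_le_pow₀ one_le_base)) (Real.one_le_exp (by positivity))

end Estimates

section SmallApproximations

variable {ι : Type*} [Fintype ι]

-- Taking `κ = 1 / (32 d ^ 2)` costs only a factor `exp (-1 / (15 d))` in volume, and since `κ⁻¹` is
-- polynomial in `d`, it enters the exponent in the size of the packing only through `log d`.
lemma exists_isBoxApproximation_card_le_mul_exp (hι : 2 ≤ Fintype.card ι) {γ L : ℝ} (hγ : 0 < γ)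
    (hL : 0 ≤ L) :
    ∃ X : Finset (Box ι),
      IsBoxApproximation X (Real.exp (-L)) (Real.exp (-(L + 1 / (15 * Fintype.card ι)))) ∧
      (X.card : ℝ) ≤ (1 + L / (1 + γ * L)) ^ (2 * Fintype.card ι) * Real.exp L *
        Real.exp (2 * Fintype.card ι * (7 * Real.log (Fintype.card ι) + γ * L)) := by
  have hι' : (2 : ℝ) ≤ Fintype.card ι := mod_cast hι
  have hκ : 1 / (32 * (Fintype.card ι : ℝ) ^ 2) < 1 / 2 :=
    one_div_lt_one_div_of_lt two_pos (by nlinarith)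
  obtain ⟨X, hX, hcard⟩ := exists_isBoxApproximation_card_le_packing (ι := ι) (Real.exp_pos (-L))
    (Real.exp_le_one_iff.2 (neg_nonpos.2 hL)) (by positivity) hκ
  refine ⟨X, hX.mono ?_, hcard.trans ?_⟩
  · rw [neg_add, add_comm, Real.exp_add]
    gcongr
    exact exp_neg_le_one_sub_pow (one_le_two.trans hι)
  · rw [← Real.exp_neg, neg_neg, Real.log_exp, mul_right_comm]
    gcongr
    exact one_add_mul_pow_le hι hγ hL

lemma exists_isBoxApproximation_of_le (hι : 2 ≤ Fintype.card ι) {γ L : ℝ} (hγ : 0 < γ)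
    (hL : 1 / (2 * Fintype.card ι) ≤ L) :
    ∃ 𝒩 : Finset (Box ι),
      IsBoxApproximation 𝒩 (Real.exp (-L)) (Real.exp (-((1 + γ) * L)) / 4) ∧
      (𝒩.card : ℝ) ≤ approximationBound (Fintype.card ι) γ L := by
  have hL₀ : 0 ≤ L := le_trans (by positivity) hL
  have hι' : (2 : ℝ) ≤ Fintype.card ι := mod_cast hι
  obtain ⟨X, hX, hcard⟩ := exists_isBoxApproximation_card_le_mul_exp (ι := ι) hι hγ hL₀
  have threshold_lt : Real.exp (-((1 + γ) * L)) / 4 <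
      Real.exp (-(L + 1 / (15 * Fintype.card ι))) := by
    rw [← Real.log_lt_log_iff (by positivity) (Real.exp_pos _), Real.log_exp,
      Real.log_div (Real.exp_ne_zero _) four_ne_zero, Real.log_exp]
    have one_lt_log_four : 1 < Real.log 4 :=
      (Real.lt_log_iff_exp_lt four_pos).2 (Real.exp_one_lt_three.trans (by norm_num))
    have : 1 / (15 * (Fintype.card ι : ℝ)) ≤ 1 :=
      (div_le_one (by positivity)).2 (by linarith)
    nlinarith [mul_nonneg hγ.le hL₀]
  have hX_card : (X.card : ℝ) ≤ 6 / 5 * (1 + L / (1 + γ * L)) ^ (2 * Fintype.card ι) *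
      Real.exp L * Real.exp (2 * Fintype.card ι * (7 * Real.log (Fintype.card ι) + γ * L)) := by
    refine hcard.trans ?_
    gcongr
    exact le_mul_of_one_le_left (by positivity) (by norm_num)
  obtain ⟨𝒩, h𝒩, h𝒩_card⟩ := hX.exists_card_le (by positivity) threshold_lt
    (Real.exp_le_one_iff.2 (neg_nonpos.2 (by positivity)))
    (t := 2 * Fintype.card ι * (7 * Real.log (Fintype.card ι) + γ * L)) (by positivity)
    (log_div_log_pow_mul_le hι hγ hL₀) hX_card
  exact ⟨𝒩, h𝒩, h𝒩_card.trans (mul_add_one_le_approximationBound hι hγ hL)⟩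

lemma exists_isBoxApproximation_of_lt (hι : 2 ≤ Fintype.card ι) {γ L : ℝ} (hγ : 0 < γ)
    (hL₀ : 0 ≤ L) (hL : L < 1 / (2 * Fintype.card ι)) :
    ∃ 𝒩 : Finset (Box ι),
      IsBoxApproximation 𝒩 (Real.exp (-L)) (Real.exp (-((1 + γ) * L)) / 4) ∧
      (𝒩.card : ℝ) ≤ approximationBound (Fintype.card ι) γ L := by
  have hι' : (2 : ℝ) ≤ Fintype.card ι := mod_cast hι
  have inv_le : 1 / (Fintype.card ι : ℝ) ≤ 1 / 2 := one_div_le_one_div_of_le two_pos hι'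
  have half_inv_eq : 1 / (2 * (Fintype.card ι : ℝ)) = 1 / Fintype.card ι / 2 := by
    rw [div_div, mul_comm]
  have volume_ge : 1 / 4 ≤ (1 + -(1 / (Fintype.card ι : ℝ))) ^ Fintype.card ι := by
    refine le_trans (le_of_eq ?_) (sq_one_add_half_mul_le_pow hι ?_ ?_)
    · field_simp
      norm_num
    · linarith
    · field_simp
      norm_num
  have exp_ge := Real.add_one_le_exp (-L)
  refine ⟨_, (isBoxApproximation_singleton_coreBox (by linarith)
    (Real.exp_le_one_iff.2 (neg_nonpos.2 hL₀))).mono ?_, ?_⟩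
  · calc Real.exp (-((1 + γ) * L)) / 4 ≤ 1 / 4 := by
          gcongr
          exact Real.exp_le_one_iff.2 (neg_nonpos.2 (by positivity))
      _ ≤ _ := volume_ge
      _ ≤ (2 * Real.exp (-L) - 1) ^ Fintype.card ι := by
          gcongr
          · linarith
          · linarith
  · rw [Finset.card_singleton, Nat.cast_one]
    exact one_le_approximationBound hι hγ hL₀

theorem exists_isBoxApproximation_card_le (hι : 2 ≤ Fintype.card ι) {ε γ : ℝ} (hε : 0 < ε)
    (hε₁ : ε ≤ 1) (hγ : 0 < γ) :
    ∃ 𝒩 : Finset (Box ι), IsBoxApproximation 𝒩 ε (ε ^ (1 + γ) / 4) ∧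
      (𝒩.card : ℝ) ≤ approximationBound (Fintype.card ι) γ (Real.log ε⁻¹) := by
  have log_nonneg : 0 ≤ Real.log ε⁻¹ := Real.log_nonneg (one_le_inv_iff₀.2 ⟨hε, hε₁⟩)
  have exp_eq : Real.exp (-Real.log ε⁻¹) = ε := by rw [Real.log_inv, neg_neg, Real.exp_log hε]
  have rpow_eq : Real.exp (-((1 + γ) * Real.log ε⁻¹)) = ε ^ (1 + γ) := by
    rw [Real.rpow_def_of_pos hε, Real.log_inv, mul_neg, neg_neg, mul_comm]
  rw [← rpow_eq]
  nth_rw 1 [← exp_eq]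
  rcases le_or_gt (1 / (2 * (Fintype.card ι : ℝ))) (Real.log ε⁻¹) with hlarge | hsmall
  · exact exists_isBoxApproximation_of_le hι hγ hlarge
  · exact exists_isBoxApproximation_of_lt hι hγ log_nonneg hsmall

lemma exists_box_of_prod_pos {a b : ι → ℝ} (hab : ∀ i, a i ≤ b i) (hvol : 0 < ∏ i, (b i - a i)) :
    ∃ I : Box ι, I.lower = a ∧ I.upper = b := by
  refine ⟨⟨a, b, fun i => (hab i).lt_of_ne fun hi => hvol.ne' ?_⟩, rfl, rfl⟩
  exact Finset.prod_eq_zero (Finset.mem_univ i) (by rw [hi, sub_self])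

end SmallApproximations

open Finset in
/-- There is a `δ`-approximation (with `δ = ε^{1+γ}/4`) for the family of
axis-parallel boxes in `[0,1]^d` of volume at least `ε`, of cardinality at most
`7 d ln d (1 + 1/γ)^d (ln(e/ε^{1+γ}))^d / ε^{1+γ}`. -/
theorem stmt_9 (d : ℕ) (hd : 2 ≤ d) (ε γ δ : ℝ) (hε : ε ∈ Set.Ioo (0:ℝ) 1)
    (hγ : 0 < γ) (hδ : δ = ε ^ ((1:ℝ) + γ) / 4) :
    ∃ 𝒩 : Finset ((Fin d → ℝ) × (Fin d → ℝ)),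
      (𝒩.card : ℝ) ≤ 7 * d * Real.log d * (1 + 1/γ) ^ d *
          (Real.log (Real.exp 1 / ε ^ ((1:ℝ) + γ))) ^ d / ε ^ ((1:ℝ) + γ) ∧
      (∀ p ∈ 𝒩, ∀ i, 0 ≤ p.1 i ∧ p.1 i ≤ p.2 i ∧ p.2 i ≤ 1) ∧
      ∀ a b : Fin d → ℝ, (∀ i, 0 ≤ a i ∧ a i ≤ b i ∧ b i ≤ 1) →
        ε ≤ ∏ i, (b i - a i) →
        ∃ p ∈ 𝒩, (∀ i, a i ≤ p.1 i ∧ p.2 i ≤ b i) ∧ δ ≤ ∏ i, (p.2 i - p.1 i) := by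
  classical
  obtain ⟨𝒩, h𝒩, hcard⟩ := exists_isBoxApproximation_card_le (ι := Fin d)
    (hd.trans_eq (Fintype.card_fin d).symm) hε.1 hε.2.le hγ
  rw [Fintype.card_fin, approximationBound_log_inv d γ hε.1] at hcard
  refine ⟨𝒩.image fun J => (J.lower, J.upper), (Nat.cast_le.2 card_image_le).trans hcard,
    forall_mem_image.2 fun J hJ i => ?_, fun a b hab hvol => ?_⟩
  · obtain ⟨hlower, hupper⟩ := Box.le_iff_bounds.1 (h𝒩.le_unitBox J hJ)
    exact ⟨hlower i, J.lower_le_upper i, hupper i⟩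
  · obtain ⟨I, rfl, rfl⟩ := exists_box_of_prod_pos (fun i => (hab i).2.1) (hε.1.trans_le hvol)
    obtain ⟨J, hJ, hJI⟩ := h𝒩.exists_le I
      (Box.le_iff_bounds.2 ⟨fun i => (hab i).1, fun i => (hab i).2.2⟩) hvol
    obtain ⟨hlower, hupper⟩ := Box.le_iff_bounds.1 hJI
    exact ⟨_, mem_image_of_mem _ hJ, fun i => ⟨hlower i, hupper i⟩,
      hδ.trans_le (h𝒩.le_boxVol J hJ)⟩
end

section
/- Let d ≥ 1, k ≥ 1, ε, δ ∈ (0,1), and let 𝒩 be a δ-approximation for the family of axis-parallel boxes of volume at least ε in [0,1]^d with |𝒩| ≥ 3. Then N_k(ε,d) ≤ (5/δ)(ln|𝒩| + k ln(e/δ)). Moreover N = ⌊5 ln|𝒩|/δ + 5k ln(e/δ)/δ⌋ independent uniform random points in [0,1]^d satisfy, with probability at least 1 - 1/|𝒩|, that every box in 𝒩 of volume ≥ δ contains at least k+1 of the points. -/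
open MeasureTheory Finset

/-!
The number of sample points in a fixed set of measure `v ≥ δ` is binomial, and Markov's inequality
for `2 ^ (-count)` bounds the probability that it is at most `k` by `2 ^ k * (1 - v / 2) ^ N`. Once
`N δ` is about `5 (log |𝒩| + k)` this is at most `1 / |𝒩| ^ 2`, so a union bound over `𝒩` fails with
probability at most `1 / |𝒩|`. Almost every sample has distinct points, so some sample is a set of
exactly `N` points meeting every large member of `𝒩` at least `k + 1` times, and then also every box
containing such a member. The sample size with `k log (e / δ)` suffices because `log (e / δ) ≥ 1`.
-/

section Sampling

variable {α ι κ : Type*} [Fintype ι]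

theorem pow_ncard_mem_eq_prod (t : ℝ) (B : Set α) (ω : ι → α) :
    t ^ {j | ω j ∈ B}.ncard = ∏ j, (1 - B.indicator (fun _ ↦ 1 - t) (ω j)) := by
  classical
  have factor (j : ι) : 1 - B.indicator (fun _ ↦ 1 - t) (ω j) = if ω j ∈ B then t else 1 := by
    by_cases hj : ω j ∈ B <;> simp [hj]
  simp [factor, prod_ite, Set.ncard_eq_toFinset_card']

theorem ncard_sep_image_univ [DecidableEq α] {ω : ι → α} (hω : Function.Injective ω)
    (T : Set α) : {x ∈ (univ.image ω : Set α) | x ∈ T}.ncard = {j | ω j ∈ T}.ncard := by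
  rw [← Set.ncard_image_of_injective _ hω]
  congr 1
  ext x
  simp only [coe_image, coe_univ, Set.image_univ]
  grind

variable [MeasurableSpace α] {μ : Measure α} [IsProbabilityMeasure μ]

theorem integrable_pow_ncard_mem (t : ℝ) {B : Set α} (hB : MeasurableSet B) :
    Integrable (fun ω : ι → α ↦ t ^ {j | ω j ∈ B}.ncard) (Measure.pi fun _ ↦ μ) := by
  simp only [pow_ncard_mem_eq_prod]
  exact Integrable.fintype_prod (f := fun _ x ↦ 1 - B.indicator (fun _ ↦ 1 - t) x) fun _ ↦
    (integrable_const _).sub ((integrable_const _).indicator hB)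

theorem integral_pow_ncard_mem (t : ℝ) {B : Set α} (hB : MeasurableSet B) :
    ∫ ω : ι → α, t ^ {j | ω j ∈ B}.ncard ∂(Measure.pi fun _ ↦ μ) =
      (1 - μ.real B * (1 - t)) ^ Fintype.card ι := by
  simp only [pow_ncard_mem_eq_prod]
  rw [integral_fintype_prod_eq_pow fun x ↦ 1 - B.indicator (fun _ ↦ 1 - t) x,
    integral_sub (integrable_const _) ((integrable_const _).indicator hB),
    integral_indicator_const _ hB, integral_const, probReal_univ, one_smul, smul_eq_mul]

theorem pow_mul_measureReal_ncard_mem_le {t : ℝ} (ht₀ : 0 ≤ t) (ht₁ : t ≤ 1) (k : ℕ) {B : Set α}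
    (hB : MeasurableSet B) :
    t ^ k * (Measure.pi fun _ : ι ↦ μ).real {ω | {j | ω j ∈ B}.ncard ≤ k} ≤
      (1 - μ.real B * (1 - t)) ^ Fintype.card ι := by
  have markov := mul_meas_ge_le_integral_of_nonneg
    (Filter.Eventually.of_forall fun ω ↦ pow_nonneg ht₀ _)
    (integrable_pow_ncard_mem (ι := ι) (μ := μ) t hB) (t ^ k)
  rw [integral_pow_ncard_mem t hB] at markov
  refine le_trans ?_ markov
  refine mul_le_mul_of_nonneg_left (measureReal_mono fun ω hω ↦ ?_) (pow_nonneg ht₀ k)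
  exact pow_le_pow_of_le_one ht₀ ht₁ hω

theorem two_pow_mul_one_sub_half_pow_le {M v : ℝ} {k N : ℕ} (hM : Real.exp 1 ≤ M) (hv : v ≤ 1)
    (hN : 5 * (Real.log M + k) ≤ (N + 1) * v) :
    2 ^ k * (1 - v / 2) ^ N ≤ 1 / M ^ 2 := by
  have hM₀ : 0 < M := (Real.exp_pos 1).trans_le hM
  have hlog : 1 ≤ Real.log M := (Real.le_log_iff_exp_le hM₀).2 hM
  have two_pow_le : (2 : ℝ) ^ k ≤ Real.exp k := by
    rw [← Real.exp_one_pow]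
    gcongr
    linarith [Real.add_one_le_exp 1]
  have one_sub_pow_le : (1 - v / 2) ^ N ≤ Real.exp (N * -(v / 2)) := by
    rw [Real.exp_nat_mul]
    exact pow_le_pow_left₀ (by linarith) (Real.one_sub_le_exp_neg _) N
  calc 2 ^ k * (1 - v / 2) ^ N
      ≤ Real.exp k * Real.exp (N * -(v / 2)) :=
        mul_le_mul two_pow_le one_sub_pow_le (pow_nonneg (by linarith) N) (Real.exp_pos _).le
    _ = Real.exp (k + N * -(v / 2)) := (Real.exp_add _ _).symm
    _ ≤ Real.exp (-(2 * Real.log M)) := by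
      gcongr
      linarith [Nat.cast_nonneg (α := ℝ) k]
    _ = 1 / M ^ 2 := by
      rw [Real.exp_neg, mul_comm, Real.exp_mul, Real.exp_log hM₀, Real.rpow_two, one_div]

theorem measureReal_ncard_mem_le_le_one_div_sq {M : ℝ} {k : ℕ} {B : Set α} (hM : Real.exp 1 ≤ M)
    (hB : MeasurableSet B) (hN : 5 * (Real.log M + k) ≤ (Fintype.card ι + 1) * μ.real B) :
    (Measure.pi fun _ : ι ↦ μ).real {ω | {j | ω j ∈ B}.ncard ≤ k} ≤ 1 / M ^ 2 := by
  have htail := pow_mul_measureReal_ncard_mem_le (ι := ι) (μ := μ) (t := 1 / 2)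
    (by norm_num) (by norm_num) k hB
  rw [one_div_pow, one_div_mul_eq_div, div_le_iff₀' (by positivity)] at htail
  calc (Measure.pi fun _ : ι ↦ μ).real {ω | {j | ω j ∈ B}.ncard ≤ k}
      ≤ 2 ^ k * (1 - μ.real B * (1 - 1 / 2)) ^ Fintype.card ι := htail
    _ = 2 ^ k * (1 - μ.real B / 2) ^ Fintype.card ι := by ring
    _ ≤ 1 / M ^ 2 := two_pow_mul_one_sub_half_pow_le hM measureReal_le_one hN

theorem one_sub_le_measureReal_forall_lt_ncard_mem {M : ℝ} {k : ℕ} {s : Finset κ} {B : κ → Set α}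
    (hM : Real.exp 1 ≤ M) (hs : #s ≤ M) (hB : ∀ i ∈ s, MeasurableSet (B i))
    (hN : ∀ i ∈ s, 5 * (Real.log M + k) ≤ (Fintype.card ι + 1) * μ.real (B i)) :
    1 - 1 / M ≤
      (Measure.pi fun _ : ι ↦ μ).real {ω | ∀ i ∈ s, k < {j | ω j ∈ B i}.ncard} := by
  set ν := Measure.pi fun _ : ι ↦ μ
  set good := {ω : ι → α | ∀ i ∈ s, k < {j | ω j ∈ B i}.ncard}
  have hM₀ : 0 < M := (Real.exp_pos 1).trans_le hM
  have compl_good : goodᶜ = ⋃ i ∈ s, {ω | {j | ω j ∈ B i}.ncard ≤ k} := by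
    ext ω
    simp [good]
  have bad_le : ν.real goodᶜ ≤ 1 / M :=
    calc ν.real goodᶜ
        ≤ ∑ i ∈ s, ν.real {ω | {j | ω j ∈ B i}.ncard ≤ k} :=
          compl_good ▸ measureReal_biUnion_finset_le _ _
      _ ≤ #s • (1 / M ^ 2) :=
          sum_le_card_nsmul _ _ _ fun i hi ↦
            measureReal_ncard_mem_le_le_one_div_sq hM (hB i hi) (hN i hi)
      _ ≤ M * (1 / M ^ 2) := by
          rw [nsmul_eq_mul]
          gcongr
      _ = 1 / M := by field_simp
  have total : 1 ≤ ν.real good + ν.real goodᶜ := by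
    simpa using measureReal_union_le (μ := ν) good goodᶜ
  linarith

theorem ae_ne_of_indepFun {Ω : Type*} [MeasurableSpace Ω] {P : Measure Ω} [IsFiniteMeasure P]
    [MeasurableEq α] {X Y : Ω → α} (hX : AEMeasurable X P) (hY : AEMeasurable Y P)
    (hXY : ProbabilityTheory.IndepFun X Y P) [NullSingletonClass (P.map Y)] :
    ∀ᵐ ω ∂P, X ω ≠ Y ω := by
  have diagonal_null : ((P.map X).prod (P.map Y)) (Set.diagonal α) = 0 := by
    rw [Measure.measure_prod_null measurableSet_diagonal]
    refine Filter.Eventually.of_forall fun x ↦ ?_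
    have fiber : Prod.mk x ⁻¹' Set.diagonal α = {x} := by
      ext y
      simp [eq_comm]
    simp [fiber]
  rw [← hXY.map_prod_eq_prod_map_map hX hY] at diagonal_null
  exact ae_of_ae_map (hX.prodMk hY) (measure_eq_zero_iff_ae_notMem.1 diagonal_null)

theorem ae_pi_injective [MeasurableEq α] (ν : ι → Measure α) [∀ i, IsProbabilityMeasure (ν i)]
    [∀ i, NullSingletonClass (ν i)] : ∀ᵐ ω ∂Measure.pi ν, Function.Injective ω := by
  have pairwise_ne : ∀ᵐ ω ∂Measure.pi ν, ∀ i j, i ≠ j → ω i ≠ ω j := by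
    simp only [Filter.eventually_all]
    intro i j hij
    have : NullSingletonClass ((Measure.pi ν).map fun ω ↦ ω j) := by
      rw [(measurePreserving_eval ν j).map_eq]
      infer_instance
    exact ae_ne_of_indepFun (measurable_pi_apply i).aemeasurable
      (measurable_pi_apply j).aemeasurable
      ((ProbabilityTheory.iIndepFun_pi (X := fun _ x ↦ x) fun _ ↦ aemeasurable_id).indepFun hij)
  filter_upwards [pairwise_ne] with ω hω i j
  exact not_imp_not.1 (hω i j)

theorem exists_finset_card_eq_of_measure_ne_zero [MeasurableEq α] [NullSingletonClass μ]
    {C : Set α} (hC : ∀ᵐ x ∂μ, x ∈ C) {G : Set (ι → α)} (hG : Measure.pi (fun _ ↦ μ) G ≠ 0) :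
    ∃ P : Finset α, (P : Set α) ⊆ C ∧ #P = Fintype.card ι ∧
      ∃ ω ∈ G, ∀ T : Set α, {x ∈ (P : Set α) | x ∈ T}.ncard = {j | ω j ∈ T}.ncard := by
  classical
  have mem_C : ∀ᵐ ω : ι → α ∂Measure.pi fun _ ↦ μ, ∀ j, ω j ∈ C :=
    ae_all_iff.2 fun j ↦ (Measure.tendsto_eval_ae_ae (i := j)).eventually hC
  obtain ⟨ω, hωG, hωinj, hωC⟩ := Measure.exists_mem_of_measure_ne_zero_of_ae hG
    (ae_restrict_of_ae ((ae_pi_injective fun _ ↦ μ).and mem_C))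
  refine ⟨univ.image ω, ?_, card_image_of_injective _ hωinj, ω, hωG, ncard_sep_image_univ hωinj⟩
  simpa [Set.range_subset_iff] using hωC

end Sampling

section SampleSize

/-- The number `⌊5 L / δ + 5 k log (e / δ) / δ⌋` of random points, where `L` stands for the
logarithm of the size of the `δ`-approximation. -/
noncomputable def sampleSize (L δ : ℝ) (k : ℕ) : ℕ :=
  ⌊5 * L / δ + 5 * k * Real.log (Real.exp 1 / δ) / δ⌋₊

variable {L δ : ℝ}

theorem one_le_log_exp_one_div (hδ₀ : 0 < δ) (hδ₁ : δ ≤ 1) : 1 ≤ Real.log (Real.exp 1 / δ) := by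
  rw [Real.log_div (Real.exp_ne_zero 1) hδ₀.ne', Real.log_exp]
  linarith [Real.log_nonpos hδ₀.le hδ₁]

theorem le_sampleSize_add_one_mul (hδ₀ : 0 < δ) (hδ₁ : δ ≤ 1) (k : ℕ) :
    5 * (L + k) ≤ (sampleSize L δ k + 1) * δ :=
  calc 5 * (L + k)
      ≤ 5 * (L + k * Real.log (Real.exp 1 / δ)) := by
        gcongr
        exact le_mul_of_one_le_right k.cast_nonneg (one_le_log_exp_one_div hδ₀ hδ₁)
    _ = (5 * L / δ + 5 * k * Real.log (Real.exp 1 / δ) / δ) * δ := by field_simp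
    _ ≤ (sampleSize L δ k + 1) * δ := mul_le_mul_of_nonneg_right (Nat.lt_floor_add_one _).le hδ₀.le

theorem sampleSize_le (hL : 0 ≤ L) (hδ₀ : 0 < δ) (hδ₁ : δ ≤ 1) (k : ℕ) :
    sampleSize L δ k ≤ 5 / δ * (L + k * Real.log (Real.exp 1 / δ)) := by
  have hlog := one_le_log_exp_one_div hδ₀ hδ₁
  calc (sampleSize L δ k : ℝ)
      ≤ 5 * L / δ + 5 * k * Real.log (Real.exp 1 / δ) / δ := Nat.floor_le (by positivity)
    _ = 5 / δ * (L + k * Real.log (Real.exp 1 / δ)) := by ring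

end SampleSize

section Boxes

variable {ι : Type*}

/-- The cube `[0,1]^ι`, in which the points are sampled. -/
abbrev unitCube (ι : Type*) : Set (ι → ℝ) := Set.univ.pi fun _ ↦ Set.Icc (0 : ℝ) 1

/-- The half-open axis-parallel box with corners `a` and `b`, in which sample points are counted. -/
abbrev icoBox (a b : ι → ℝ) : Set (ι → ℝ) := Set.univ.pi fun i ↦ Set.Ico (a i) (b i)

variable [Fintype ι]

/-- `𝒩` is a `δ`-approximation for the axis-parallel boxes of volume at least `ε` in the unit cube:
each of them contains a member of `𝒩` of volume at least `δ`. A box is encoded by its corners. -/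
def IsBoxApproximation_s11 (ε δ : ℝ) (𝒩 : Finset ((ι → ℝ) × (ι → ℝ))) : Prop :=
  ∀ a b : ι → ℝ, (∀ i, 0 ≤ a i ∧ a i ≤ b i ∧ b i ≤ 1) → ε ≤ ∏ i, (b i - a i) →
    ∃ p ∈ 𝒩, (∀ i, a i ≤ p.1 i ∧ p.2 i ≤ b i) ∧ δ ≤ ∏ i, (p.2 i - p.1 i)

instance isProbabilityMeasure_restrict_unitCube :
    IsProbabilityMeasure ((volume : Measure (ι → ℝ)).restrict (unitCube ι)) where
  measure_univ := by
    rw [Measure.restrict_apply_univ, volume_pi_pi]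
    simp

theorem measureReal_restrict_unitCube_icoBox {a b : ι → ℝ}
    (hab : ∀ i, 0 ≤ a i ∧ a i ≤ b i ∧ b i ≤ 1) :
    (volume.restrict (unitCube ι)).real (icoBox a b) = ∏ i, (b i - a i) := by
  have box_subset : icoBox a b ⊆ unitCube ι := Set.pi_mono fun i _ ↦
    Set.Ico_subset_Icc_self.trans (Set.Icc_subset_Icc (hab i).1 (hab i).2.2)
  rw [measureReal_restrict_apply (MeasurableSet.univ_pi fun _ ↦ measurableSet_Ico),
    Set.inter_eq_left.2 box_subset, measureReal_def, Real.volume_pi_Ico_toReal fun i ↦ (hab i).2.1]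

theorem stmt_11_general [Nonempty ι] {ε δ : ℝ} {k N : ℕ} {𝒩 : Finset ((ι → ℝ) × (ι → ℝ))}
    (h𝒩box : ∀ p ∈ 𝒩, ∀ i, 0 ≤ p.1 i ∧ p.1 i ≤ p.2 i ∧ p.2 i ≤ 1) (h𝒩card : 3 ≤ #𝒩)
    (happrox : IsBoxApproximation_s11 ε δ 𝒩) (hN : 5 * (Real.log #𝒩 + k) ≤ (N + 1) * δ) :
    1 - 1 / (#𝒩 : ℝ) ≤ (Measure.pi fun _ : Fin N ↦ volume.restrict (unitCube ι)).real
      {ω | ∀ p ∈ 𝒩, δ ≤ ∏ i, (p.2 i - p.1 i) → k + 1 ≤ {j | ω j ∈ icoBox p.1 p.2}.ncard} ∧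
    ∃ P : Finset (ι → ℝ), (P : Set (ι → ℝ)) ⊆ unitCube ι ∧ #P = N ∧
      ∀ a b : ι → ℝ, (∀ i, 0 ≤ a i ∧ a i ≤ b i ∧ b i ≤ 1) → ε ≤ ∏ i, (b i - a i) →
        k + 1 ≤ {x ∈ (P : Set (ι → ℝ)) | x ∈ icoBox a b}.ncard := by
  have hM : (3 : ℝ) ≤ #𝒩 := by exact_mod_cast h𝒩card
  have hprob := one_sub_le_measureReal_forall_lt_ncard_mem (ι := Fin N)
    (μ := volume.restrict (unitCube ι)) (k := k)
    (s := {p ∈ 𝒩 | δ ≤ ∏ i, (p.2 i - p.1 i)}) (B := fun p ↦ icoBox p.1 p.2)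
    (Real.exp_one_lt_three.le.trans hM) (by exact_mod_cast card_filter_le _ _)
    (fun _ _ ↦ MeasurableSet.univ_pi fun _ ↦ measurableSet_Ico) fun p hp ↦ by
      obtain ⟨hp, hδp⟩ := mem_filter.1 hp
      rw [measureReal_restrict_unitCube_icoBox (h𝒩box p hp), Fintype.card_fin]
      exact hN.trans (by gcongr)
  simp only [mem_filter, and_imp] at hprob
  refine ⟨hprob, ?_⟩
  have hpos : 0 < 1 - 1 / (#𝒩 : ℝ) := sub_pos.2 ((div_lt_one (by linarith)).2 (by linarith))
  obtain ⟨P, hPcube, hPcard, ω, hω, hcount⟩ := exists_finset_card_eq_of_measure_ne_zero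
    (ae_restrict_mem (MeasurableSet.univ_pi fun _ ↦ measurableSet_Icc))
    ((measureReal_ne_zero_iff).1 (hpos.trans_le hprob).ne')
  refine ⟨P, hPcube, hPcard.trans (Fintype.card_fin N), fun a b hab hvol ↦ ?_⟩
  obtain ⟨p, hp, hpab, hδp⟩ := happrox a b hab hvol
  rw [hcount]
  refine (hω p hp hδp).trans_le (Set.ncard_le_ncard fun j hj ↦ ?_)
  exact Set.pi_mono (fun i _ ↦ Set.Ico_subset_Ico (hpab i).1 (hpab i).2) hj

end Boxes

/-- `k`-dispersion union-bound lemma: given a `δ`-approximation `𝒩` (|𝒩| ≥ 3) for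
boxes of volume ≥ ε, one has `N_k(ε,d) ≤ (5/δ)(ln|𝒩| + k ln(e/δ))`; moreover
`N = ⌊5 ln|𝒩|/δ + 5k ln(e/δ)/δ⌋` independent uniform points give, with probability
at least `1 - 1/|𝒩|`, at least `k+1` points in every box of `𝒩` of volume ≥ δ. -/
theorem stmt_11 (d k : ℕ) (hd : 1 ≤ d) (hk : 1 ≤ k) (ε δ : ℝ)
    (hε : ε ∈ Set.Ioo (0:ℝ) 1) (hδ : δ ∈ Set.Ioo (0:ℝ) 1)
    (𝒩 : Finset ((Fin d → ℝ) × (Fin d → ℝ)))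
    (h𝒩box : ∀ p ∈ 𝒩, ∀ i, 0 ≤ p.1 i ∧ p.1 i ≤ p.2 i ∧ p.2 i ≤ 1)
    (h𝒩card : 3 ≤ 𝒩.card)
    (happrox : ∀ a b : Fin d → ℝ, (∀ i, 0 ≤ a i ∧ a i ≤ b i ∧ b i ≤ 1) →
      ε ≤ ∏ i, (b i - a i) →
      ∃ p ∈ 𝒩, (∀ i, a i ≤ p.1 i ∧ p.2 i ≤ b i) ∧ δ ≤ ∏ i, (p.2 i - p.1 i))
    (N : ℕ)
    (hN : N = ⌊5 * Real.log 𝒩.card / δ + 5 * k * Real.log (Real.exp 1 / δ) / δ⌋₊) :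
    (1 - 1 / (𝒩.card : ℝ) ≤
      ((Measure.pi fun _ : Fin N =>
          (volume : Measure (Fin d → ℝ)).restrict (Set.univ.pi fun _ => Set.Icc (0:ℝ) 1))
        {ω : Fin N → (Fin d → ℝ) |
          ∀ p ∈ 𝒩, δ ≤ ∏ i, (p.2 i - p.1 i) →
            k + 1 ≤ ({j : Fin N | ω j ∈ Set.univ.pi fun i =>
              Set.Ico (p.1 i) (p.2 i)}).ncard}).toReal) ∧
    ∃ P : Finset (Fin d → ℝ),
      (P : Set (Fin d → ℝ)) ⊆ (Set.univ.pi fun _ => Set.Icc (0:ℝ) 1) ∧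
      (P.card : ℝ) ≤ (5 / δ) * (Real.log 𝒩.card + k * Real.log (Real.exp 1 / δ)) ∧
      ∀ a b : Fin d → ℝ, (∀ i, 0 ≤ a i ∧ a i ≤ b i ∧ b i ≤ 1) →
        ε < ∏ i, (b i - a i) →
        k + 1 ≤ ({x ∈ (P : Set (Fin d → ℝ)) |
          x ∈ Set.univ.pi fun i => Set.Ico (a i) (b i)}).ncard := by
  have : Nonempty (Fin d) := Fin.pos_iff_nonempty.1 hd
  obtain rfl : N = sampleSize (Real.log #𝒩) δ k := hN
  obtain ⟨hprob, P, hP, hPN, hcount⟩ := stmt_11_general h𝒩box h𝒩card happrox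
    (le_sampleSize_add_one_mul hδ.1 hδ.2.le k)
  have hcard := sampleSize_le (Real.log_natCast_nonneg #𝒩) hδ.1 hδ.2.le k
  exact ⟨hprob, P, hP, hPN ▸ hcard, fun a b hab hvol ↦ hcount a b hab hvol.le⟩
end

section
/- Let d ≥ 2 and ε ∈ (0, 1/2]. Then N(ε, d) ≤ 12e · (4d ln ln(8/ε) + ln(1/ε)) / ε, where N(ε,d) is the inverse minimal dispersion. In particular there exists a set of at most this many points in [0,1]^d meeting every axis-parallel box of volume greater than ε. -/
open Finset

/-- The dispersion of a finite point set `P ⊆ [0,1]^d`: the supremum of volumes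
of axis-parallel boxes in the cube disjoint from `P`. -/
noncomputable def disp (d : ℕ) (P : Finset (Fin d → ℝ)) : ℝ :=
  sSup {v : ℝ | ∃ a b : Fin d → ℝ, (∀ i, 0 ≤ a i ∧ a i ≤ b i ∧ b i ≤ 1) ∧
    v = ∏ i, (b i - a i) ∧
    ∀ x ∈ P, x ∉ Set.univ.pi fun i => Set.Ico (a i) (b i)}

/-- Minimal dispersion over `n`-point subsets of the cube. -/
noncomputable def dispStar (d n : ℕ) : ℝ :=
  sInf {v : ℝ | ∃ P : Finset (Fin d → ℝ),
    (P : Set (Fin d → ℝ)) ⊆ (Set.univ.pi fun _ => Set.Icc (0:ℝ) 1) ∧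
    P.card = n ∧ v = disp d P}

/-- Inverse of the minimal dispersion. -/
noncomputable def Ninv (ε : ℝ) (d : ℕ) : ℕ :=
  sInf {n : ℕ | dispStar d n ≤ ε}

/-!
A random point of the cube hits a given box of volume `δ` with probability `δ`, so choosing points
greedily, `n` points miss at most `exp (-δ n) * #S` members of any finite family `S` of such boxes.
It therefore suffices to find, inside every box of volume greater than `ε`, a box of volume at
least `δ = ε / e` from a small family, got by shrinking each side to a grid.

Long sides need a grid of mesh about `1 / d`, so counting the family naively would cost a factor
`d ^ 2` per coordinate. But a box with sides `wᵢ` cuts off only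
`∑ (1 - wᵢ) ≤ ∑ log (1 / wᵢ) ≤ log (1 / ε)` in total. Weighting an interval exponentially in the
number of cells it cuts off makes the total weight per coordinate `O(log (8 / ε) ^ 3)`,
independently of `d`, while every box that is needed keeps weight at least `ε ^ 2 * exp (-18 d)`.
-/

section GreedyHitting

open MeasureTheory

variable {α ι : Type*} [MeasurableSpace α] (μ : Measure α) [IsProbabilityMeasure μ]
  {A : ι → Set α} {δ : ℝ}

open Classical in
lemma exists_card_filter_notMem_le (hA : ∀ s, MeasurableSet (A s)) (S : Finset ι)
    (hδ : ∀ s ∈ S, δ ≤ μ.real (A s)) :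
    ∃ x, (#{s ∈ S | x ∉ A s} : ℝ) ≤ (1 - δ) * #S := by
  have hint (s : ι) : Integrable ((A s)ᶜ.indicator (1 : α → ℝ)) μ :=
    (integrable_const 1).indicator (hA s).compl
  obtain ⟨x, hx⟩ := exists_le_integral (integrable_finsetSum S fun s _ => hint s)
  refine ⟨x, ?_⟩
  calc (#{s ∈ S | x ∉ A s} : ℝ)
      = ∑ s ∈ S, (A s)ᶜ.indicator 1 x := by simp [card_filter, Set.indicator_apply]
    _ ≤ ∑ s ∈ S, μ.real (A s)ᶜ := by
        rw [integral_finsetSum S fun s _ => hint s] at hx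
        simpa only [integral_indicator_one (hA _).compl] using hx
    _ ≤ ∑ _s ∈ S, (1 - δ) := sum_le_sum fun s hs => by
        rw [probReal_compl_eq_one_sub (hA s)]
        linarith [hδ s hs]
    _ = (1 - δ) * #S := by rw [sum_const, nsmul_eq_mul, mul_comm]

open Classical in
lemma exists_finset_card_filter_unhit_le (hA : ∀ s, MeasurableSet (A s)) (S : Finset ι)
    (hδ : ∀ s ∈ S, δ ≤ μ.real (A s)) (n : ℕ) :
    ∃ P : Finset α, #P ≤ n ∧ (#{s ∈ S | ∀ x ∈ P, x ∉ A s} : ℝ) ≤ Real.exp (-(δ * n)) * #S := by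
  induction n with
  | zero => exact ⟨∅, by simp⟩
  | succ n ih =>
    obtain ⟨P, hcard, hP⟩ := ih
    obtain ⟨x, hx⟩ := exists_card_filter_notMem_le μ hA {s ∈ S | ∀ x ∈ P, x ∉ A s}
      fun s hs => hδ s (mem_of_mem_filter s hs)
    refine ⟨insert x P, (card_insert_le x P).trans (by lia), ?_⟩
    calc (#{s ∈ S | ∀ y ∈ insert x P, y ∉ A s} : ℝ)
        = #{s ∈ {s ∈ S | ∀ y ∈ P, y ∉ A s} | x ∉ A s} := by
          simp only [filter_filter, forall_mem_insert, and_comm]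
      _ ≤ (1 - δ) * #{s ∈ S | ∀ y ∈ P, y ∉ A s} := hx
      _ ≤ Real.exp (-δ) * (Real.exp (-(δ * n)) * #S) := by
          gcongr
          exact Real.one_sub_le_exp_neg δ
      _ = Real.exp (-(δ * (n + 1 : ℕ))) * #S := by
          rw [← mul_assoc, ← Real.exp_add]
          push_cast
          ring_nf

/- Rankin weighting: at most `(∑ s, wt s) / t` sets have weight at least `t`, so a bound on the
total weight replaces a bound on the number of sets. -/
lemma exists_finset_forall_mem_of_sum_mul_exp_lt [Fintype ι] (hA : ∀ s, MeasurableSet (A s))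
    {wt : ι → ℝ} (hwt : ∀ s, 0 ≤ wt s) {t : ℝ} {n : ℕ}
    (h : (∑ s, wt s) * Real.exp (-(δ * n)) < t) :
    ∃ P : Finset α, #P ≤ n ∧ ∀ s, t ≤ wt s → δ ≤ μ.real (A s) → ∃ x ∈ P, x ∈ A s := by
  classical
  have ht : 0 < t := (mul_nonneg (sum_nonneg fun s _ => hwt s) (Real.exp_pos _).le).trans_lt h
  set S : Finset ι := {s | t ≤ wt s ∧ δ ≤ μ.real (A s)}
  obtain ⟨P, hcard, hP⟩ := exists_finset_card_filter_unhit_le μ hA S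
    (fun s hs => (mem_filter.1 hs).2.2) n
  refine ⟨P, hcard, fun s hts hδs => ?_⟩
  have markov : #S * t ≤ ∑ s, wt s :=
    calc #S * t = ∑ _s ∈ S, t := by rw [sum_const, nsmul_eq_mul]
      _ ≤ ∑ s ∈ S, wt s := sum_le_sum fun s hs => (mem_filter.1 hs).2.1
      _ ≤ ∑ s, wt s := sum_le_univ_sum_of_nonneg hwt
  have unhit_lt_one : (#{s ∈ S | ∀ x ∈ P, x ∉ A s} : ℝ) < 1 := by
    refine lt_of_mul_lt_mul_right ?_ ht.le
    calc (#{s ∈ S | ∀ x ∈ P, x ∉ A s} : ℝ) * t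
        ≤ Real.exp (-(δ * n)) * #S * t := by gcongr
      _ = #S * t * Real.exp (-(δ * n)) := by ring
      _ ≤ (∑ s, wt s) * Real.exp (-(δ * n)) := by gcongr
      _ < 1 * t := by rwa [one_mul]
  have unhit_empty : {s ∈ S | ∀ x ∈ P, x ∉ A s} = ∅ :=
    card_eq_zero.1 (Nat.lt_one_iff.1 (mod_cast unhit_lt_one))
  by_contra! hs
  exact filter_eq_empty_iff.1 unhit_empty (mem_filter.2 ⟨mem_univ s, hts, hδs⟩) hs

lemma exists_finset_forall_mem_pi_Ico {κ : Type*} [Fintype κ] [Fintype ι] (lo hi : ι → κ → ℝ)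
    {wt : ι → ℝ} (hwt : ∀ s, 0 ≤ wt s) {t : ℝ} {n : ℕ}
    (h : (∑ s, wt s) * Real.exp (-(δ * n)) < t) :
    ∃ P : Finset (κ → ℝ), (P : Set (κ → ℝ)) ⊆ (Set.univ.pi fun _ => Set.Icc (0 : ℝ) 1) ∧
      #P ≤ n ∧ ∀ s, t ≤ wt s → (∀ i, 0 ≤ lo s i ∧ lo s i ≤ hi s i ∧ hi s i ≤ 1) →
        δ ≤ ∏ i, (hi s i - lo s i) →
        ∃ x ∈ P, x ∈ Set.univ.pi fun i => Set.Ico (lo s i) (hi s i) := by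
  classical
  set Q : Set (κ → ℝ) := Set.univ.pi fun _ => Set.Icc (0 : ℝ) 1 with hQ
  have : IsProbabilityMeasure (volume.restrict Q) := ⟨by
    rw [Measure.restrict_apply_univ, hQ, volume_pi_pi]
    simp⟩
  have hmeas (s : ι) : MeasurableSet (Set.univ.pi fun i => Set.Ico (lo s i) (hi s i)) :=
    MeasurableSet.univ_pi fun _ => measurableSet_Ico
  obtain ⟨P, hcard, hP⟩ :=
    exists_finset_forall_mem_of_sum_mul_exp_lt (volume.restrict Q) hmeas hwt h
  refine ⟨{x ∈ P | x ∈ Q}, fun x hx => (mem_filter.1 hx).2, (card_filter_le P _).trans hcard,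
    fun s hts hs hδs => ?_⟩
  have hsub : (Set.univ.pi fun i => Set.Ico (lo s i) (hi s i)) ⊆ Q :=
    Set.pi_mono fun i _ =>
      Set.Ico_subset_Icc_self.trans (Set.Icc_subset_Icc (hs i).1 (hs i).2.2)
  obtain ⟨x, hxP, hx⟩ := hP s hts <| by
    rwa [measureReal_restrict_apply (hmeas s), Set.inter_eq_left.2 hsub, Measure.real,
      Real.volume_pi_Ico_toReal fun i => (hs i).2.1]
  exact ⟨x, mem_filter.2 ⟨hxP, hsub hx⟩, hx⟩

end GreedyHitting

section ExpBounds

lemma exp_neg_two_mul_le_one_sub {x : ℝ} (hx0 : 0 ≤ x) (hx : x ≤ 1 / 2) :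
    Real.exp (-(2 * x)) ≤ 1 - x := by
  have hpos : 0 < 1 - x := by linarith
  rw [← Real.le_log_iff_exp_le hpos]
  refine le_trans ?_ (Real.one_sub_inv_le_log_of_pos hpos)
  field_simp
  nlinarith

lemma geom_sum_exp_neg_inv_le {k : ℕ} (hk : k ≠ 0) (n : ℕ) :
    ∑ i ∈ range n, Real.exp (-(1 / k : ℝ)) ^ i ≤ k + 1 := by
  have hk' : (0 : ℝ) < k := by positivity
  have hlt : Real.exp (-(1 / k : ℝ)) < 1 := Real.exp_lt_one_iff.2 (by simpa using hk')
  have hle : Real.exp (-(1 / k : ℝ)) ≤ k / (k + 1) := by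
    rw [Real.exp_neg, inv_le_comm₀ (Real.exp_pos _) (by positivity), inv_div, add_div,
      div_self hk'.ne', add_comm]
    exact Real.add_one_le_exp _
  calc ∑ i ∈ range n, Real.exp (-(1 / k : ℝ)) ^ i
      ≤ ∑' i, Real.exp (-(1 / k : ℝ)) ^ i :=
        (summable_geometric_of_lt_one (Real.exp_pos _).le hlt).sum_le_tsum _
          fun i _ => by positivity
    _ = (1 - Real.exp (-(1 / k : ℝ)))⁻¹ := tsum_geometric_of_lt_one (Real.exp_pos _).le hlt
    _ ≤ (1 - k / (k + 1 : ℝ))⁻¹ := by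
        gcongr
        rw [sub_pos, div_lt_one (by positivity)]
        linarith
    _ = k + 1 := by field_simp; ring

lemma exp_neg_le_rpow_div {k s v : ℝ} (hk : 0 < k) (hs : 0 ≤ s) (hv : Real.exp (-k) ≤ v) :
    Real.exp (-s) ≤ v ^ (s / k) :=
  calc Real.exp (-s) = Real.exp (-k) ^ (s / k) := by rw [← Real.exp_mul]; field_simp
    _ ≤ v ^ (s / k) := by gcongr

lemma rpow_one_div_two_mul_le_exp_neg {k w : ℝ} (hk : 0 < k) (hw0 : 0 ≤ w) (hw : w ≤ 1 / 2) :
    w ^ (1 / (2 * k)) ≤ Real.exp (-(2 * (1 / (6 * k)))) := by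
  have half_le : 1 / 2 ≤ Real.exp (-(2 / 3)) := by
    rw [← Real.log_le_iff_le_exp (by norm_num), one_div, Real.log_inv]
    linarith [Real.log_two_gt_d9]
  calc w ^ (1 / (2 * k)) ≤ Real.exp (-(2 / 3)) ^ (1 / (2 * k)) := by
        gcongr
        exact hw.trans half_le
    _ = Real.exp (-(2 * (1 / (6 * k)))) := by
        rw [← Real.exp_mul]
        congr 1
        field_simp
        norm_num

lemma exists_two_pow_near_inv {k : ℕ} (hk : k ≠ 0) {w : ℝ} (hkw : Real.exp (-k) ≤ w)
    (hw : w ≤ 1) : ∃ j < 2 * k, (2 : ℝ) ^ j ≤ w⁻¹ ∧ w⁻¹ < 2 ^ (j + 1) := by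
  have hw0 : 0 < w := (Real.exp_pos _).trans_le hkw
  obtain ⟨j, hj, hj'⟩ := exists_nat_pow_near ((one_le_inv₀ hw0).2 hw) (one_lt_two (α := ℝ))
  refine ⟨j, (pow_lt_pow_iff_right₀ (one_lt_two (α := ℝ))).1 ?_, hj, hj'⟩
  calc (2 : ℝ) ^ j ≤ w⁻¹ := hj
    _ ≤ Real.exp k := by rwa [inv_le_comm₀ hw0 (Real.exp_pos _), ← Real.exp_neg]
    _ = Real.exp 1 ^ k := by rw [← Real.exp_nat_mul, mul_one]
    _ < 4 ^ k := by gcongr; linarith [Real.exp_one_lt_d9]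
    _ = 2 ^ (2 * k) := by rw [pow_mul]; norm_num

lemma prod_le_apply_of_le_one {ι : Type*} [Fintype ι] {w : ι → ℝ} (hw0 : ∀ i, 0 ≤ w i)
    (hw1 : ∀ i, w i ≤ 1) (i : ι) : ∏ j, w j ≤ w i := by
  classical
  rw [← mul_prod_erase univ w (mem_univ i)]
  exact mul_le_of_le_one_right (hw0 i) (prod_le_one (fun j _ => hw0 j) fun j _ => hw1 j)

lemma rpow_mul_exp_le_prod {ι : Type*} [Fintype ι] {w f : ι → ℝ} {v p q : ℝ} (hv : 0 ≤ v)
    (hp : 0 ≤ p) (hw : ∀ i, 0 ≤ w i) (hvw : v ≤ ∏ i, w i)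
    (hf : ∀ i, w i ^ p * Real.exp (-q) ≤ f i) :
    v ^ p * Real.exp (-(Fintype.card ι * q)) ≤ ∏ i, f i :=
  calc v ^ p * Real.exp (-(Fintype.card ι * q))
      ≤ (∏ i, w i) ^ p * Real.exp (-(Fintype.card ι * q)) := by gcongr
    _ = ∏ i, w i ^ p * Real.exp (-q) := by
        rw [prod_mul_distrib, Real.finsetProd_rpow univ w fun i _ => hw i, prod_const, card_univ,
          ← Real.exp_nat_mul, mul_neg]
    _ ≤ ∏ i, f i := prod_le_prod
        (fun i _ => mul_nonneg (Real.rpow_nonneg (hw i) p) (Real.exp_pos _).le) fun i _ => hf i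

end ExpBounds

/-- A subinterval of `[0, 1)` with endpoints on the grid of mesh `1 / H`, encoded by the numbers
`(m, n)` of grid cells cut off on its left and on its right: it is `[m / H, 1 - n / H)`.
It is empty when `H ≤ m + n`. -/
abbrev GridInterval (H : ℕ) : Type := Fin (H + 1) × Fin (H + 1)

namespace GridInterval

variable {H : ℕ}

/-- The left endpoint of a grid interval. -/
noncomputable def left (c : GridInterval H) : ℝ := c.1 / H

/-- The right endpoint of a grid interval. -/
noncomputable def right (c : GridInterval H) : ℝ := 1 - c.2 / H

/-- The number of grid cells outside a grid interval. -/
def trim (c : GridInterval H) : ℕ := c.1 + c.2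

lemma exists_subinterval (hH : H ≠ 0) {a b : ℝ} (ha : 0 ≤ a) (hab : a ≤ b) (hb : b ≤ 1) :
    ∃ c : GridInterval H, a ≤ c.left ∧ c.right ≤ b ∧ c.trim ≤ H * (1 - (b - a)) + 2 := by
  have hH' : (0 : ℝ) < H := by positivity
  have hm : ⌈H * a⌉₊ ≤ H := Nat.ceil_le.2 (mul_le_of_le_one_right hH'.le (by linarith))
  have hn : ⌈H * (1 - b)⌉₊ ≤ H := Nat.ceil_le.2 (mul_le_of_le_one_right hH'.le (by linarith))
  refine ⟨(⟨_, Nat.lt_succ_of_le hm⟩, ⟨_, Nat.lt_succ_of_le hn⟩), ?_, ?_, ?_⟩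
  · rw [left, le_div_iff₀' hH']
    exact Nat.le_ceil _
  · rw [right, sub_le_comm, le_div_iff₀' hH']
    exact Nat.le_ceil _
  · have hm' := Nat.ceil_lt_add_one (mul_nonneg hH'.le ha)
    have hn' := Nat.ceil_lt_add_one (mul_nonneg hH'.le (sub_nonneg.2 hb))
    simp only [trim, Nat.cast_add]
    linarith

lemma mul_exp_le_right_sub_left (hH : H ≠ 0) {w x : ℝ} (hw : 0 ≤ w) (hx0 : 0 ≤ x)
    (hx : x ≤ 1 / 2) (hwx : 2 ≤ H * (w * x)) {c : GridInterval H}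
    (hc : c.trim ≤ H * (1 - w) + 2) :
    w * Real.exp (-(2 * x)) ≤ c.right - c.left := by
  have hH' : (0 : ℝ) < H := by positivity
  calc w * Real.exp (-(2 * x)) ≤ w * (1 - x) := by gcongr; exact exp_neg_two_mul_le_one_sub hx0 hx
    _ ≤ 1 - c.trim / H := by
        rw [le_sub_comm, div_le_iff₀' hH']
        linarith
    _ = c.right - c.left := by
        simp only [left, right, trim, Nat.cast_add]
        ring

lemma rpow_mul_exp_le_pow_trim {k : ℕ} {w : ℝ} (hw : 0 < w) {c : GridInterval H}
    (hc : c.trim ≤ H * (1 - w) + 2) :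
    w ^ (H / k : ℝ) * Real.exp (-(2 / k)) ≤ Real.exp (-(1 / k : ℝ)) ^ c.trim := by
  have hlog : 1 - w ≤ -Real.log w := by linarith [Real.log_le_sub_one_of_pos hw]
  have htrim : (c.trim : ℝ) ≤ H * -Real.log w + 2 := hc.trans (by gcongr)
  calc w ^ (H / k : ℝ) * Real.exp (-(2 / k))
      = Real.exp (-((H * -Real.log w + 2) / k)) := by
        rw [Real.rpow_def_of_pos hw, ← Real.exp_add]
        ring_nf
    _ ≤ Real.exp (-(c.trim / k)) := by gcongr
    _ = Real.exp (-(1 / k : ℝ)) ^ c.trim := by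
        rw [← Real.exp_nat_mul]
        ring_nf

lemma sum_pow_trim (r : ℝ) :
    ∑ c : GridInterval H, r ^ c.trim = (∑ i ∈ range (H + 1), r ^ i) ^ 2 := by
  simp only [trim, pow_add, Fintype.sum_prod_type, ← Fintype.sum_mul_sum,
    Fin.sum_univ_eq_sum_range (r ^ ·), sq]

end GridInterval

/-- The intervals used to approximate, from inside, each side of a box in dimension `d` all of
whose sides are longer than `exp (-k)`. Sides longer than `1 / 2` use the fixed grid of mesh
`1 / (16 * d)`; a side of length about `2⁻ʲ` uses the grid of mesh `2⁻ʲ / (24 * k)`. -/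
abbrev NetInterval (d k : ℕ) : Type :=
  GridInterval (16 * d) ⊕ Σ j : Fin (2 * k), GridInterval (2 ^ (j : ℕ) * (24 * k))

namespace NetInterval

variable {d k : ℕ}

/-- The left endpoint of a net interval. -/
noncomputable def left : NetInterval d k → ℝ :=
  Sum.elim GridInterval.left fun c => c.2.left

/-- The right endpoint of a net interval. -/
noncomputable def right : NetInterval d k → ℝ :=
  Sum.elim GridInterval.right fun c => c.2.right

/-- The weight of a net interval: long intervals, of which a box of given volume has most of its
sides, are the heavy ones, while the total weight stays bounded independently of `d`. -/
noncomputable def weight : NetInterval d k → ℝ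
  | .inl c => Real.exp (-(1 / k : ℝ)) ^ c.trim
  | .inr ⟨j, _⟩ => (1 / 4) ^ (j : ℕ)

lemma weight_nonneg : ∀ c : NetInterval d k, 0 ≤ c.weight
  | .inl _ => by unfold weight; positivity
  | .inr _ => by unfold weight; positivity

lemma sum_weight_le (hk : k ≠ 0) : ∑ c : NetInterval d k, c.weight ≤ 1254 * (k : ℝ) ^ 3 := by
  have hk1 : (1 : ℝ) ≤ k := mod_cast Nat.one_le_iff_ne_zero.2 hk
  have long : ∑ c : GridInterval (16 * d), Real.exp (-(1 / k : ℝ)) ^ c.trim ≤ (k + 1) ^ 2 := by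
    rw [GridInterval.sum_pow_trim]
    gcongr
    exact geom_sum_exp_neg_inv_le hk _
  have short (j : Fin (2 * k)) :
      ∑ _c : GridInterval (2 ^ (j : ℕ) * (24 * k)), (1 / 4 : ℝ) ^ (j : ℕ) ≤ (24 * k + 1) ^ 2 := by
    have hpow : (1 : ℝ) ≤ 2 ^ (j : ℕ) := one_le_pow₀ one_le_two
    calc ∑ _c : GridInterval (2 ^ (j : ℕ) * (24 * k)), (1 / 4 : ℝ) ^ (j : ℕ)
        = ((2 ^ (j : ℕ) * (24 * k) + 1) / 2 ^ (j : ℕ)) ^ 2 := by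
          simp only [sum_const, card_univ, Fintype.card_prod, Fintype.card_fin, nsmul_eq_mul]
          have four_pow : (4 : ℝ) ^ (j : ℕ) = (2 ^ (j : ℕ)) ^ 2 := by rw [pow_right_comm]; norm_num
          rw [one_div_pow, four_pow]
          push_cast
          ring
      _ ≤ (24 * k + 1) ^ 2 := by
          gcongr
          rw [div_le_iff₀ (by positivity)]
          linarith
  calc ∑ c : NetInterval d k, c.weight
      ≤ (k + 1) ^ 2 + ∑ _j : Fin (2 * k), (24 * k + 1 : ℝ) ^ 2 := by
        rw [Fintype.sum_sum_type, Fintype.sum_sigma]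
        exact add_le_add long (sum_le_sum fun j _ => short j)
    _ ≤ (k + k) ^ 2 + 2 * k * (24 * k + k) ^ 2 := by
        rw [sum_const, card_univ, Fintype.card_fin, nsmul_eq_mul]
        push_cast
        gcongr
    _ = 4 * k ^ 2 + 1250 * k ^ 3 := by ring
    _ ≤ 1254 * k ^ 3 := by nlinarith [sq_nonneg (k : ℝ)]

/-- The net interval `c` lies inside `[a, b)`, is almost as long, and is not too light. The losses
are powers of `b - a`, so that over the sides of a box they multiply to powers of its volume. -/
structure IsInnerApprox (c : NetInterval d k) (a b : ℝ) : Prop where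
  le_left : a ≤ c.left
  right_le : c.right ≤ b
  le_length : (b - a) ^ (1 + 1 / (2 * k) : ℝ) * Real.exp (-(1 / (2 * d))) ≤ c.right - c.left
  le_weight : (b - a) ^ (16 * d / k + 2 : ℝ) * Real.exp (-(2 / k)) ≤ c.weight

variable {a b : ℝ}

lemma exists_isInnerApprox_of_half_le (hd : d ≠ 0) (ha : 0 ≤ a) (hb : b ≤ 1)
    (hab : 1 / 2 ≤ b - a) : ∃ c : NetInterval d k, c.IsInnerApprox a b := by
  have hw0 : 0 < b - a := by linarith
  have hw1 : b - a ≤ 1 := by linarith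
  have hd1 : (1 : ℝ) ≤ d := mod_cast Nat.one_le_iff_ne_zero.2 hd
  obtain ⟨c, hac, hcb, htrim⟩ :=
    GridInterval.exists_subinterval (H := 16 * d) (by positivity) ha (by linarith) hb
  refine ⟨.inl c, hac, hcb, ?_, ?_⟩
  · calc (b - a) ^ (1 + 1 / (2 * k) : ℝ) * Real.exp (-(1 / (2 * d)))
        ≤ (b - a) * Real.exp (-(2 * (1 / (4 * d)))) := by
          gcongr
          · exact Real.rpow_le_self_of_le_one hw0.le hw1 (by simp)
          · apply le_of_eq; field_simp; norm_num
      _ ≤ c.right - c.left := by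
          refine GridInterval.mul_exp_le_right_sub_left (by positivity) hw0.le (by positivity)
            ?_ ?_ htrim
          · rw [div_le_div_iff₀ (by positivity) two_pos]
            linarith
          · push_cast
            field_simp
            linarith
  · calc (b - a) ^ (16 * d / k + 2 : ℝ) * Real.exp (-(2 / k))
        ≤ (b - a) ^ ((16 * d : ℕ) / k : ℝ) * Real.exp (-(2 / k)) := by
          push_cast
          gcongr ?_ * _
          exact Real.rpow_le_rpow_of_exponent_ge hw0 hw1 (by linarith)
      _ ≤ Real.exp (-(1 / k : ℝ)) ^ c.trim := GridInterval.rpow_mul_exp_le_pow_trim hw0 htrim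

lemma exists_isInnerApprox_of_le_half (hk : k ≠ 0) (ha : 0 ≤ a) (hb : b ≤ 1)
    (hkab : Real.exp (-k) ≤ b - a) (hab : b - a ≤ 1 / 2) :
    ∃ c : NetInterval d k, c.IsInnerApprox a b := by
  have hw0 : 0 < b - a := (Real.exp_pos _).trans_le hkab
  have hk1 : (1 : ℝ) ≤ k := mod_cast Nat.one_le_iff_ne_zero.2 hk
  obtain ⟨j, hjk, hj, hj'⟩ := exists_two_pow_near_inv hk hkab (by linarith)
  obtain ⟨c, hac, hcb, htrim⟩ :=
    GridInterval.exists_subinterval (H := 2 ^ j * (24 * k)) (by positivity) ha (by linarith) hb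
  refine ⟨.inr ⟨⟨j, hjk⟩, c⟩, hac, hcb, ?_, ?_⟩
  · calc (b - a) ^ (1 + 1 / (2 * k) : ℝ) * Real.exp (-(1 / (2 * d)))
        ≤ (b - a) ^ (1 + 1 / (2 * k) : ℝ) :=
          mul_le_of_le_one_right (by positivity) (Real.exp_le_one_iff.2 (by simp))
      _ = (b - a) * (b - a) ^ (1 / (2 * k) : ℝ) := Real.rpow_one_add' hw0.le (by positivity)
      _ ≤ (b - a) * Real.exp (-(2 * (1 / (6 * k)))) := by
          gcongr
          exact rpow_one_div_two_mul_le_exp_neg (by positivity) hw0.le hab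
      _ ≤ c.right - c.left := by
          refine GridInterval.mul_exp_le_right_sub_left (by positivity) hw0.le (by positivity)
            ?_ ?_ htrim
          · rw [div_le_div_iff₀ (by positivity) two_pos]
            linarith
          · rw [pow_succ, inv_lt_iff_one_lt_mul₀ hw0] at hj'
            push_cast
            field_simp
            linarith
  · calc (b - a) ^ (16 * d / k + 2 : ℝ) * Real.exp (-(2 / k))
        ≤ (b - a) ^ (16 * d / k + 2 : ℝ) := mul_le_of_le_one_right (by positivity)
          (Real.exp_le_one_iff.2 (neg_nonpos.2 (by positivity)))
      _ ≤ (b - a) ^ (2 : ℝ) := Real.rpow_le_rpow_of_exponent_ge hw0 (by linarith)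
          (le_add_of_nonneg_left (by positivity))
      _ ≤ ((2 ^ j)⁻¹) ^ 2 := by
          rw [Real.rpow_two]
          gcongr
          exact (le_inv_comm₀ (by positivity) hw0).1 hj
      _ = (1 / 4) ^ j := by
          rw [← inv_pow, pow_right_comm]
          norm_num

lemma exists_isInnerApprox (hd : d ≠ 0) (hk : k ≠ 0) (ha : 0 ≤ a) (hb : b ≤ 1)
    (hab : Real.exp (-k) ≤ b - a) : ∃ c : NetInterval d k, c.IsInnerApprox a b :=
  (le_total (1 / 2) (b - a)).elim (exists_isInnerApprox_of_half_le hd ha hb)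
    (exists_isInnerApprox_of_le_half hk ha hb hab)

lemma exists_subbox (hd : d ≠ 0) (hk : k ≠ 0) {ε : ℝ} (hε : Real.exp (-k) ≤ ε)
    {a b : Fin d → ℝ} (hab : ∀ i, 0 ≤ a i ∧ a i ≤ b i ∧ b i ≤ 1) (hvol : ε ≤ ∏ i, (b i - a i)) :
    ∃ c : Fin d → NetInterval d k,
      (∀ i, a i ≤ (c i).left ∧ (c i).left ≤ (c i).right ∧ (c i).right ≤ b i) ∧
      ε * Real.exp (-1) ≤ ∏ i, ((c i).right - (c i).left) ∧
      ε ^ 2 * Real.exp (-(18 * d)) ≤ ∏ i, (c i).weight := by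
  have hk1 : (1 : ℝ) ≤ k := mod_cast Nat.one_le_iff_ne_zero.2 hk
  have hε0 : 0 < ε := (Real.exp_pos _).trans_le hε
  have hside0 (i : Fin d) : 0 ≤ b i - a i := sub_nonneg.2 (hab i).2.1
  have hside (i : Fin d) : ε ≤ b i - a i :=
    hvol.trans (prod_le_apply_of_le_one hside0 (fun j => by linarith [hab j]) i)
  choose c hc using fun i =>
    exists_isInnerApprox hd hk (hab i).1 (hab i).2.2 (hε.trans (hside i))
  have hle (i : Fin d) : (c i).left ≤ (c i).right :=
    sub_nonneg.1 (le_trans (by have := hside0 i; positivity) (hc i).le_length)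
  refine ⟨c, fun i => ⟨(hc i).le_left, hle i, (hc i).right_le⟩, ?_, ?_⟩
  · calc ε * Real.exp (-1) = ε * Real.exp (-(1 / 2)) * Real.exp (-(d * (1 / (2 * d)))) := by
          rw [mul_assoc, ← Real.exp_add]
          congr 2
          field_simp
          norm_num
      _ ≤ ε * ε ^ (1 / 2 / k : ℝ) * Real.exp (-(d * (1 / (2 * d)))) := by
          gcongr
          exact exp_neg_le_rpow_div (by positivity) (by norm_num) hε
      _ = ε ^ (1 + 1 / (2 * k) : ℝ) * Real.exp (-(Fintype.card (Fin d) * (1 / (2 * d)))) := by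
          rw [Real.rpow_one_add' hε0.le (by positivity), div_div, Fintype.card_fin]
      _ ≤ ∏ i, ((c i).right - (c i).left) :=
          rpow_mul_exp_le_prod hε0.le (by positivity) hside0 hvol fun i => (hc i).le_length
  · calc ε ^ 2 * Real.exp (-(18 * d)) = Real.exp (-(16 * d)) * ε ^ 2 * Real.exp (-(d * 2)) := by
          rw [mul_right_comm, ← Real.exp_add, mul_comm]
          ring_nf
      _ ≤ ε ^ (16 * d / k : ℝ) * ε ^ 2 * Real.exp (-(d * (2 / k))) := by
          gcongr
          · exact exp_neg_le_rpow_div (by positivity) (by positivity) hε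
          · exact div_le_self two_pos.le hk1
      _ = ε ^ (16 * d / k + 2 : ℝ) * Real.exp (-(Fintype.card (Fin d) * (2 / k))) := by
          rw [Real.rpow_add hε0, Real.rpow_two, Fintype.card_fin]
      _ ≤ ∏ i, (c i).weight := rpow_mul_exp_le_prod hε0.le (by positivity) hside0 hvol
          fun i => (hc i).le_weight

end NetInterval

section Dispersion

variable {d : ℕ} {ε : ℝ}

lemma exists_finset_forall_box_of_pow_mul_exp_lt (hd : d ≠ 0) {k n : ℕ} (hk : k ≠ 0)
    (hε : Real.exp (-k) ≤ ε)
    (hn : (1254 * (k : ℝ) ^ 3) ^ d * Real.exp (-(ε * Real.exp (-1) * n)) <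
      ε ^ 2 * Real.exp (-(18 * d))) :
    ∃ P : Finset (Fin d → ℝ),
      (P : Set (Fin d → ℝ)) ⊆ (Set.univ.pi fun _ => Set.Icc (0 : ℝ) 1) ∧ #P ≤ n ∧
      ∀ a b : Fin d → ℝ, (∀ i, 0 ≤ a i ∧ a i ≤ b i ∧ b i ≤ 1) → ε < ∏ i, (b i - a i) →
        ∃ x ∈ P, x ∈ Set.univ.pi fun i => Set.Ico (a i) (b i) := by
  have total_weight :
      ∑ c : Fin d → NetInterval d k, ∏ i, (c i).weight ≤ (1254 * (k : ℝ) ^ 3) ^ d := by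
    rw [← Fintype.sum_pow]
    exact pow_le_pow_left₀ (sum_nonneg fun c _ => c.weight_nonneg)
      (NetInterval.sum_weight_le hk) d
  obtain ⟨P, hPQ, hcard, hP⟩ := exists_finset_forall_mem_pi_Ico
    (fun (c : Fin d → NetInterval d k) i => (c i).left) (fun c i => (c i).right)
    (fun c => prod_nonneg fun i _ => (c i).weight_nonneg)
    ((mul_le_mul_of_nonneg_right total_weight (Real.exp_pos _).le).trans_lt hn)
  refine ⟨P, hPQ, hcard, fun a b hab hvol => ?_⟩
  obtain ⟨c, hc, hlen, hwt⟩ := NetInterval.exists_subbox hd hk hε hab hvol.le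
  obtain ⟨x, hxP, hx⟩ := hP c hwt
    (fun i => ⟨(hab i).1.trans (hc i).1, (hc i).2.1, (hc i).2.2.trans (hab i).2.2⟩) hlen
  exact ⟨x, hxP, Set.pi_mono (fun i _ => Set.Ico_subset_Ico (hc i).1 (hc i).2.2) hx⟩

lemma mul_ceil_pow_three_le_exp {Λ : ℝ} (hΛ : 2 ≤ Λ) :
    1254 * (⌈Λ⌉₊ : ℝ) ^ 3 ≤ Real.exp (9 + 3 * Real.log Λ) := by
  have hΛ0 : 0 < Λ := by linarith
  have hceil : (⌈Λ⌉₊ : ℝ) ≤ 3 / 2 * Λ := by linarith [Nat.ceil_lt_add_one hΛ0.le]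
  calc 1254 * (⌈Λ⌉₊ : ℝ) ^ 3 ≤ 1254 * (3 / 2 * Λ) ^ 3 := by gcongr
    _ ≤ 2.7 ^ 9 * Λ ^ 3 := by
        rw [mul_pow, ← mul_assoc]
        gcongr
        norm_num
    _ ≤ Real.exp 1 ^ 9 * Λ ^ 3 := by
        gcongr
        linarith [Real.exp_one_gt_d9]
    _ = Real.exp (9 + 3 * Real.log Λ) := by
        rw [← Real.exp_nat_mul, Real.exp_add, ← Real.log_rpow hΛ0, Real.exp_log (by positivity)]
        norm_num

lemma two_le_log_eight_div (hε : ε ∈ Set.Ioc (0 : ℝ) 1) : 2 ≤ Real.log (8 / ε) :=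
  calc 2 ≤ 3 * Real.log 2 := by linarith [Real.log_two_gt_d9]
    _ = Real.log 8 := by
        rw [← Real.log_rpow two_pos]
        norm_num
    _ ≤ Real.log (8 / ε) := Real.log_le_log (by norm_num) (le_div_self (by norm_num) hε.1 hε.2)

lemma exp_neg_ceil_log_eight_div_le (hε : 0 < ε) :
    Real.exp (-⌈Real.log (8 / ε)⌉₊) ≤ ε :=
  calc Real.exp (-⌈Real.log (8 / ε)⌉₊) ≤ Real.exp (-Real.log (8 / ε)) := by
        gcongr
        exact Nat.le_ceil _
    _ = ε / 8 := by rw [← Real.log_inv, inv_div, Real.exp_log (by positivity)]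
    _ ≤ ε := div_le_self hε.le (by norm_num)

lemma sub_one_lt_mul_exp_neg_one_mul (hε : ε ∈ Set.Ioc (0 : ℝ) 1) {c x : ℝ}
    (h : Real.exp 1 * c / ε < x + 1) : c - 1 < ε * Real.exp (-1) * x := by
  have hδ1 : ε * Real.exp (-1) ≤ 1 :=
    mul_le_one₀ hε.2 (Real.exp_pos _).le (Real.exp_le_one_iff.2 (by norm_num))
  have hδ0 : 0 < ε * Real.exp (-1) := mul_pos hε.1 (Real.exp_pos _)
  calc c - 1 = ε * Real.exp (-1) * (Real.exp 1 * c / ε) - 1 := by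
        have := hε.1.ne'
        rw [Real.exp_neg]
        field_simp
    _ < ε * Real.exp (-1) * (x + 1) - 1 := by gcongr
    _ ≤ ε * Real.exp (-1) * x := by linarith

lemma pow_mul_exp_lt_of_dispersion_bound_lt (hd : d ≠ 0) (hε : ε ∈ Set.Ioc (0 : ℝ) 1) {n : ℕ}
    (hn : 12 * Real.exp 1 * (4 * d * Real.log (Real.log (8 / ε)) + Real.log (1 / ε)) / ε
      < n + 1) :
    (1254 * (⌈Real.log (8 / ε)⌉₊ : ℝ) ^ 3) ^ d * Real.exp (-(ε * Real.exp (-1) * n)) <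
      ε ^ 2 * Real.exp (-(18 * d)) := by
  have hΛ := two_le_log_eight_div hε
  have hd1 : (1 : ℝ) ≤ d := mod_cast Nat.one_le_iff_ne_zero.2 hd
  set ℓ := Real.log (Real.log (8 / ε))
  set L := Real.log (1 / ε) with hL
  have hℓ : 2 / 3 ≤ ℓ := by linarith [Real.log_le_log two_pos hΛ, Real.log_two_gt_d9]
  have hdℓ : d * (2 / 3) ≤ d * ℓ := by gcongr
  have hL0 : 0 ≤ L := Real.log_nonneg ((one_le_div hε.1).2 hε.2)
  have hεL : ε = Real.exp (-L) := by rw [hL, one_div, Real.log_inv, neg_neg, Real.exp_log hε.1]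
  have expected_hits : 12 * (4 * d * ℓ + L) - 1 < ε * Real.exp (-1) * n :=
    sub_one_lt_mul_exp_neg_one_mul hε (by rwa [← mul_assoc, mul_comm (Real.exp 1)])
  calc (1254 * (⌈Real.log (8 / ε)⌉₊ : ℝ) ^ 3) ^ d * Real.exp (-(ε * Real.exp (-1) * n))
      ≤ Real.exp (9 + 3 * ℓ) ^ d * Real.exp (-(ε * Real.exp (-1) * n)) := by
        gcongr
        exact mul_ceil_pow_three_le_exp hΛ
    _ = Real.exp (d * (9 + 3 * ℓ) - ε * Real.exp (-1) * n) := by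
        rw [← Real.exp_nat_mul, ← Real.exp_add, sub_eq_add_neg]
    _ < Real.exp (2 * -L + -(18 * d)) := by
        rw [Real.exp_lt_exp]
        linarith
    _ = ε ^ 2 * Real.exp (-(18 * d)) := by
        rw [Real.exp_add, hεL, ← Real.exp_nat_mul]
        norm_num

lemma Ninv_le_card {P : Finset (Fin d → ℝ)} (hε : 0 ≤ ε)
    (hPQ : (P : Set (Fin d → ℝ)) ⊆ (Set.univ.pi fun _ => Set.Icc (0 : ℝ) 1))
    (hP : ∀ a b : Fin d → ℝ, (∀ i, 0 ≤ a i ∧ a i ≤ b i ∧ b i ≤ 1) → ε < ∏ i, (b i - a i) →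
      ∃ x ∈ P, x ∈ Set.univ.pi fun i => Set.Ico (a i) (b i)) :
    Ninv ε d ≤ #P := by
  have disp_le : disp d P ≤ ε := by
    refine Real.sSup_le ?_ hε
    rintro _ ⟨a, b, hab, rfl, hdisjoint⟩
    by_contra! hvol
    obtain ⟨x, hxP, hx⟩ := hP a b hab hvol
    exact hdisjoint x hxP hx
  have disp_nonneg (Q : Finset (Fin d → ℝ)) : 0 ≤ disp d Q := by
    refine Real.sSup_nonneg ?_
    rintro _ ⟨a, b, hab, rfl, -⟩
    exact prod_nonneg fun i _ => sub_nonneg.2 (hab i).2.1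
  have dispStar_le : dispStar d #P ≤ disp d P :=
    csInf_le ⟨0, by rintro _ ⟨Q, -, -, rfl⟩; exact disp_nonneg Q⟩ ⟨P, hPQ, rfl, rfl⟩
  exact Nat.sInf_le (dispStar_le.trans disp_le)

end Dispersion

theorem stmt_17_general (d : ℕ) (hd : d ≠ 0) (ε : ℝ) (hε : ε ∈ Set.Ioc (0 : ℝ) 1) :
    (Ninv ε d : ℝ) ≤
      12 * Real.exp 1 * (4 * d * Real.log (Real.log (8 / ε)) + Real.log (1 / ε)) / ε ∧
    ∃ P : Finset (Fin d → ℝ),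
      (P : Set (Fin d → ℝ)) ⊆ (Set.univ.pi fun _ => Set.Icc (0 : ℝ) 1) ∧
      (P.card : ℝ) ≤
        12 * Real.exp 1 * (4 * d * Real.log (Real.log (8 / ε)) + Real.log (1 / ε)) / ε ∧
      ∀ a b : Fin d → ℝ, (∀ i, 0 ≤ a i ∧ a i ≤ b i ∧ b i ≤ 1) →
        ε < ∏ i, (b i - a i) →
        ∃ x ∈ P, x ∈ Set.univ.pi fun i => Set.Ico (a i) (b i) := by
  have hΛ := two_le_log_eight_div hε
  have hk : ⌈Real.log (8 / ε)⌉₊ ≠ 0 := (Nat.ceil_pos.2 (by linarith)).ne'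
  set X := 12 * Real.exp 1 * (4 * d * Real.log (Real.log (8 / ε)) + Real.log (1 / ε)) / ε
  have hX : 0 ≤ X := by
    have hℓ : 0 ≤ Real.log (Real.log (8 / ε)) := Real.log_nonneg (by linarith)
    have hL : 0 ≤ Real.log (1 / ε) := Real.log_nonneg ((one_le_div hε.1).2 hε.2)
    have := hε.1
    positivity
  obtain ⟨P, hPQ, hcard, hP⟩ := exists_finset_forall_box_of_pow_mul_exp_lt hd hk
    (exp_neg_ceil_log_eight_div_le hε.1)
    (pow_mul_exp_lt_of_dispersion_bound_lt hd hε (Nat.lt_floor_add_one X))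
  have hcardX : (#P : ℝ) ≤ X := (Nat.cast_le.2 hcard).trans (Nat.floor_le hX)
  exact ⟨(Nat.cast_le.2 (Ninv_le_card hε.1.le hPQ hP)).trans hcardX, P, hPQ, hcardX, hP⟩

/-- Main theorem: `N(ε,d) ≤ 12e (4 d ln ln(8/ε) + ln(1/ε)) / ε` for `d ≥ 2`,
`0 < ε ≤ 1/2`; in particular there is a point set of at most this size meeting
every axis-parallel box of volume greater than `ε`. -/
theorem stmt_17 (d : ℕ) (hd : 2 ≤ d) (ε : ℝ) (hε : ε ∈ Set.Ioc (0:ℝ) (1/2)) :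
    (Ninv ε d : ℝ) ≤
      12 * Real.exp 1 * (4 * d * Real.log (Real.log (8/ε)) + Real.log (1/ε)) / ε ∧
    ∃ P : Finset (Fin d → ℝ),
      (P : Set (Fin d → ℝ)) ⊆ (Set.univ.pi fun _ => Set.Icc (0:ℝ) 1) ∧
      (P.card : ℝ) ≤
        12 * Real.exp 1 * (4 * d * Real.log (Real.log (8/ε)) + Real.log (1/ε)) / ε ∧
      ∀ a b : Fin d → ℝ, (∀ i, 0 ≤ a i ∧ a i ≤ b i ∧ b i ≤ 1) →
        ε < ∏ i, (b i - a i) →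
        ∃ x ∈ P, x ∈ Set.univ.pi fun i => Set.Ico (a i) (b i) := by
  exact stmt_17_general d (by lia) ε ⟨hε.1, hε.2.trans (by norm_num)⟩
end
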